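/- For every real c with 0 < c < 1, the limit as n → ∞ of log₂|𝒫(n,c)| / C(n,2) exists and equals h(c), where C(n,2) = n(n−1)/2. -/

import Mathlib

/-!
Put `N = C(n,2)` and let `H` be the binary entropy; replacing `c` by `min(c, 1 - c) = d` through
complementation, the claim is that there are `2 ^ ((H(q) / 2 + o(1)) N)` perfect graphs with
`⌊cN⌋` edges, where `q = min(2d, 1/2)`.

*Upper bound.* A perfect graph has no induced 5-cycle. By a weighted form of Pajor's lemma
(`sum_pow_le_sum_shatterer`), for `0 < x ≤ 1` the sum of `x ^ e(G)` over a family of graphs is at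
most the sum of `x ^ |S|` over the sets `S` of pairs it shatters. If the family has no induced
5-cycle, a shattered `S` cannot contain a large complete tripartite graph `K_{t,t,t}`: all
adjacencies between its three classes could be prescribed, and a universal choice of them forces
an induced 5-cycle whatever happens inside the classes (`hasC5_of_universal`). Graphs without
`K_{t,t,t}` have total weight `(1 + x) ^ (n²/4 + o(n²))` (`KFree3_bound`), which is proved without
the regularity lemma: such a graph either has no `K_{M,M}`, and there are only `exp (o(n²))` of
those, or it contains one, say with classes `A` and `B`; then all but boundedly many vertices have
fewer than `t` neighbours in `A` or in `B`, so that deleting `A ∪ B` costs a factor of about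
`(1 + x) ^ (M n)`, and recursion applies. Optimising over `x` (`entropy_identity`) gives the
bound, with `x = 1` when `d ≥ 1/4`.

*Lower bound.* Split the vertices into halves `A` and `B`, and `B` into `K` and `I`; take `A` and
`K` independent, `I` a clique completely joined to `K`, and the edges between `A` and `B`
arbitrary. These graphs and their complements are perfect (`JoinSplit.colorable`,
`CoJoinSplit.colorable`), the size of `K` tunes the number of edges, and the entropy bound for
binomial coefficients (`log_choose_ge`) counts them.
-/

open Finset SimpleGraph
open scoped Classical

/-- Binary entropy with base-2 logarithm. -/
noncomputable def binEnt (x : ℝ) : ℝ := -(x * Real.logb 2 x) - (1 - x) * Real.logb 2 (1 - x)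

/-- The function `h(c)` from the paper. -/
noncomputable def hfun (c : ℝ) : ℝ :=
  if c < 1/4 then binEnt (2*c) / 2
  else if c ≤ 3/4 then 1/2
  else binEnt (2*c - 1) / 2
/-- Number of edges of a graph. -/
noncomputable def edgeCount {V : Type} (G : SimpleGraph V) : ℕ := Nat.card G.edgeSet

/-- `G` is perfect: for every induced subgraph the chromatic number equals the clique number. -/
noncomputable def IsPerfect {V : Type} (G : SimpleGraph V) : Prop :=
  ∀ s : Set V, (G.induce s).chromaticNumber = ((G.induce s).cliqueNum : ℕ∞)

/-- `𝒫(n,c)`: the perfect graphs on vertex set `{1,…,n}` with exactly `⌊c·C(n,2)⌋` edges. -/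
noncomputable def Pset (n : ℕ) (c : ℝ) : Finset (SimpleGraph (Fin n)) :=
  univ.filter fun G => IsPerfect G ∧ edgeCount G = ⌊c * (n.choose 2 : ℝ)⌋₊

/-! ### A weighted Pajor lemma -/

/-- Weighted form of Pajor's lemma: for `0 ≤ x ≤ 1` the total weight `x ^ |s|` of a family is at
most that of the family of sets it shatters. -/
lemma sum_pow_le_sum_shatterer {α : Type*} [DecidableEq α] {x : ℝ} (hx0 : 0 ≤ x) (hx1 : x ≤ 1)
    (𝒜 : Finset (Finset α)) :
    ∑ s ∈ 𝒜, x ^ #s ≤ ∑ s ∈ 𝒜.shatterer, x ^ #s := by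
  have aux : ∀ {a : α} {𝒜 : Finset (Finset α)} {t : Finset α},
      (∀ t ∈ 𝒜, a ∉ t) → 𝒜.Shatters t → a ∉ t := by
    intro a 𝒜 t h ht
    obtain ⟨u, hu, htu⟩ := ht.exists_superset
    exact notMem_mono htu <| h u hu
  refine memberFamily_induction_on 𝒜 ?_ ?_ ?_
  · rw [Finset.sum_empty]
    exact Finset.sum_nonneg fun _ _ => by positivity
  · exact le_of_eq rfl
  intro a 𝒜 ih₀ ih₁
  set P := (memberSubfamily a 𝒜).shatterer with hP
  set Q := (nonMemberSubfamily a 𝒜).shatterer with hQ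
  have hPa : ∀ s ∈ P, a ∉ s := fun s hs =>
    aux (fun t ht ↦ (mem_memberSubfamily.1 ht).2) (mem_shatterer.1 hs)
  have hQa : ∀ s ∈ Q, a ∉ s := fun s hs =>
    aux (fun t ht ↦ (mem_nonMemberSubfamily.1 ht).2) (mem_shatterer.1 hs)
  have hsplit : ∑ s ∈ 𝒜, x ^ #s
      = x * ∑ s ∈ memberSubfamily a 𝒜, x ^ #s + ∑ s ∈ nonMemberSubfamily a 𝒜, x ^ #s := by
    rw [← Finset.sum_filter_add_sum_filter_not 𝒜 (fun s => a ∈ s)]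
    congr 1
    rw [memberSubfamily, Finset.sum_image, Finset.mul_sum]
    · refine Finset.sum_congr rfl fun s hs => ?_
      rw [← pow_succ', card_erase_add_one (mem_filter.1 hs).2]
    · intro s hs t ht h
      have := congrArg (insert a) h
      simp only [coe_filter, Set.mem_ofPred_eq] at hs ht
      simpa [insert_erase hs.2, insert_erase ht.2] using this
  set ℬ : Finset (Finset α) := (P ∩ Q).image (insert a)
  have hℬ : ∑ s ∈ ℬ, x ^ #s = x * ∑ s ∈ P ∩ Q, x ^ #s := by
    rw [Finset.sum_image, Finset.mul_sum]
    · refine Finset.sum_congr rfl fun s hs => ?_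
      rw [card_insert_of_notMem (hPa s (mem_inter.1 hs).1), pow_succ']
    · intro s hs t ht h
      have := congrArg (fun u => erase u a) h
      simpa [erase_insert (hPa s (mem_inter.1 hs).1), erase_insert (hPa t (mem_inter.1 ht).1)]
        using this
  have hdisj : Disjoint (P ∪ Q) ℬ := by
    simp only [ℬ, Finset.disjoint_left, mem_union, mem_image, not_exists, not_and]
    rintro _ (hs | hs) s - rfl
    · exact hPa _ hs <| mem_insert_self _ _
    · exact hQa _ hs <| mem_insert_self _ _
  have hsub : (P ∪ Q) ∪ ℬ ⊆ 𝒜.shatterer := by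
    refine union_subset (union_subset ?_ <| shatterer_mono <| filter_subset _ _) ?_
    · simp only [hP, subset_iff, mem_shatterer]
      rintro s hs t ht
      have has : a ∉ s := hPa s (mem_shatterer.2 hs)
      obtain ⟨u, hu, rfl⟩ := hs ht
      rw [mem_memberSubfamily] at hu
      exact ⟨insert a u, hu.1, inter_insert_of_notMem has⟩
    · refine forall_mem_image.2 fun s hs ↦ mem_shatterer.2 fun t ht ↦ ?_
      simp only [hP, hQ, mem_inter, mem_shatterer] at hs
      rw [subset_insert_iff] at ht
      by_cases ha : a ∈ t
      · obtain ⟨u, hu, hsu⟩ := hs.1 ht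
        rw [mem_memberSubfamily] at hu
        refine ⟨_, hu.1, ?_⟩
        rw [← insert_inter_distrib, hsu, insert_erase ha]
      · obtain ⟨u, hu, hsu⟩ := hs.2 ht
        rw [mem_nonMemberSubfamily] at hu
        refine ⟨_, hu.1, ?_⟩
        rwa [insert_inter_of_notMem hu.2, hsu, erase_eq_self]
  have hw : ∀ s : Finset α, 0 ≤ x ^ #s := fun s => by positivity
  have h1 : ∑ s ∈ P ∪ Q, x ^ #s + ∑ s ∈ ℬ, x ^ #s ≤ ∑ s ∈ 𝒜.shatterer, x ^ #s := by
    rw [← Finset.sum_union hdisj]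
    exact Finset.sum_le_sum_of_subset_of_nonneg hsub fun _ _ _ => hw _
  have h2 := Finset.sum_union_inter (s₁ := P) (s₂ := Q) (f := fun s => x ^ #s)
  have h3 : ∑ s ∈ P ∩ Q, x ^ #s ≤ ∑ s ∈ P, x ^ #s :=
    Finset.sum_le_sum_of_subset_of_nonneg inter_subset_left fun _ _ _ => hw _
  rw [hsplit]
  rw [hℬ] at h1
  have h4 := mul_le_mul_of_nonneg_left ih₁ hx0
  have h5 : (1 - x) * ∑ s ∈ P ∩ Q, x ^ #s ≤ (1 - x) * ∑ s ∈ P, x ^ #s :=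
    mul_le_mul_of_nonneg_left h3 (by linarith)
  linarith

/-! ### Counting graphs without complete tripartite subgraphs -/

/-- `S`, read as the edge set of a graph, contains all pairs between `A` and `B`. -/
def HasBi {α : Type*} (S : Finset (Sym2 α)) (A B : Finset α) : Prop :=
  ∀ a ∈ A, ∀ b ∈ B, s(a, b) ∈ S

/-- The graph with edge set `S` contains no complete bipartite graph `K_{M,M}`. -/
def KFree2 {α : Type*} (M : ℕ) (S : Finset (Sym2 α)) : Prop :=
  ¬ ∃ A B : Finset α, #A = M ∧ #B = M ∧ Disjoint A B ∧ HasBi S A B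

/-- The graph with edge set `S` contains no complete tripartite graph `K_{t,t,t}`. -/
def KFree3 {α : Type*} (t : ℕ) (S : Finset (Sym2 α)) : Prop :=
  ¬ ∃ A B C : Finset α, #A = t ∧ #B = t ∧ #C = t ∧ Disjoint A B ∧ Disjoint A C ∧ Disjoint B C ∧
    HasBi S A B ∧ HasBi S A C ∧ HasBi S B C

/-- The neighbours of `v` inside `A`, in the graph with edge set `S`. -/
noncomputable def nbIn {α : Type*} (S : Finset (Sym2 α)) (A : Finset α) (v : α) : Finset α :=
  {a ∈ A | s(v, a) ∈ S}

lemma nbIn_subset {α : Type*} (S : Finset (Sym2 α)) (A : Finset α) (v : α) : nbIn S A v ⊆ A :=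
  filter_subset _ _

lemma mem_nbIn {α : Type*} {S : Finset (Sym2 α)} {A : Finset α} {v a : α} :
    a ∈ nbIn S A v ↔ a ∈ A ∧ s(v, a) ∈ S := by
  simp [nbIn]

/-- The parts of `S` inside `R` and between `R` and `A` are disjoint. -/
lemma card_parts_le {α : Type*} [Fintype α] [DecidableEq α] (S : Finset (Sym2 α))
    (R A : Finset α) (hRA : Disjoint R A) :
    #(S ∩ R.sym2) + ∑ v, #(if v ∈ R then nbIn S A v else ∅) ≤ #S := by
  have h1 : ∑ v, #(if v ∈ R then nbIn S A v else ∅) = #(R.biUnion fun v =>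
      (nbIn S A v).image fun a => s(v, a)) := by
    rw [card_biUnion]
    · rw [← Finset.sum_filter_add_sum_filter_not univ (fun v => v ∈ R)]
      rw [Finset.sum_congr rfl (g := fun _ => 0) (s₁ := univ.filter (fun v => ¬ v ∈ R))]
      · simp only [sum_const_zero, add_zero]
        rw [show univ.filter (fun v => v ∈ R) = R by ext; simp]
        refine Finset.sum_congr rfl fun v hv => ?_
        rw [if_pos hv, card_image_of_injective]
        intro a b h
        exact Sym2.congr_right.1 h
      · intro v hv
        rw [if_neg (mem_filter.1 hv).2]; simp
    · intro v hv w hw hvw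
      rw [Function.onFun, Finset.disjoint_left]
      intro e he he'
      obtain ⟨a, ha, rfl⟩ := mem_image.1 he
      obtain ⟨b, hb, h⟩ := mem_image.1 he'
      have ha' := (mem_nbIn.1 ha).1
      have hb' := (mem_nbIn.1 hb).1
      rw [Sym2.eq_iff] at h
      rcases h with h | h
      · exact hvw h.1.symm
      · exact Finset.disjoint_left.1 hRA hw (h.1 ▸ ha')
  rw [h1, ← card_union_of_disjoint]
  · apply card_le_card
    apply union_subset inter_subset_left
    intro e he
    obtain ⟨v, hv, he⟩ := mem_biUnion.1 he
    obtain ⟨a, ha, rfl⟩ := mem_image.1 he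
    exact (mem_nbIn.1 ha).2
  · rw [Finset.disjoint_left]
    intro e he he'
    obtain ⟨v, hv, he'⟩ := mem_biUnion.1 he'
    obtain ⟨a, ha, rfl⟩ := mem_image.1 he'
    have := (mem_inter.1 he).2
    rw [mk_mem_sym2_iff] at this
    exact Finset.disjoint_left.1 hRA this.2 (mem_nbIn.1 ha).1

/-- `S ⊆ V.sym2` is determined by its parts inside `A`, inside `V \ A` and in between. -/
lemma eq_of_parts {α : Type*} [DecidableEq α] {V A : Finset α}
    {S T : Finset (Sym2 α)} (hS : S ⊆ V.sym2) (hT : T ⊆ V.sym2)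
    (h1 : S ∩ A.sym2 = T ∩ A.sym2) (h2 : ∀ v ∈ V \ A, nbIn S A v = nbIn T A v)
    (h3 : S ∩ (V \ A).sym2 = T ∩ (V \ A).sym2) : S = T := by
  have key : ∀ S T : Finset (Sym2 α), S ⊆ V.sym2 → S ∩ A.sym2 = T ∩ A.sym2 →
      (∀ v ∈ V \ A, nbIn S A v = nbIn T A v) → S ∩ (V \ A).sym2 = T ∩ (V \ A).sym2 → S ⊆ T := by
    intro S T hS h1 h2 h3 e
    induction e with | h u v => ?_
    intro he
    have hV := mk_mem_sym2_iff.1 (hS he)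
    by_cases hu : u ∈ A <;> by_cases hv : v ∈ A
    · have : s(u, v) ∈ S ∩ A.sym2 := mem_inter.2 ⟨he, mk_mem_sym2_iff.2 ⟨hu, hv⟩⟩
      rw [h1] at this
      exact (mem_inter.1 this).1
    · have : u ∈ nbIn S A v := mem_nbIn.2 ⟨hu, by rwa [Sym2.eq_swap]⟩
      rw [h2 v (mem_sdiff.2 ⟨hV.2, hv⟩)] at this
      rw [Sym2.eq_swap]
      exact (mem_nbIn.1 this).2
    · have : v ∈ nbIn S A u := mem_nbIn.2 ⟨hv, he⟩
      rw [h2 u (mem_sdiff.2 ⟨hV.1, hu⟩)] at this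
      exact (mem_nbIn.1 this).2
    · have : s(u, v) ∈ S ∩ (V \ A).sym2 := mem_inter.2 ⟨he, mk_mem_sym2_iff.2
        ⟨mem_sdiff.2 ⟨hV.1, hu⟩, mem_sdiff.2 ⟨hV.2, hv⟩⟩⟩
      rw [h3] at this
      exact (mem_inter.1 this).1
  exact subset_antisymm (key S T hS h1 h2 h3)
    (key T S hT h1.symm (fun v hv => (h2 v hv).symm) h3.symm)

/-- One round of the recursion: delete the vertex set `A` from the graphs of `𝒢`. If all but `C` of
the remaining vertices attach to `A` through a set in `Good`, the weight of `𝒢` is controlled by the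
weight of the family `ℛ` of the remainders and by the weight of `Good`. -/
lemma weight_step {α : Type*} [Fintype α] [DecidableEq α] {x : ℝ} (hx0 : 0 < x) (hx1 : x ≤ 1)
    (V A : Finset α) (𝒢 ℛ : Finset (Finset (Sym2 α))) (Good : Finset (Finset α))
    (hGood : ∅ ∈ Good) (C : ℕ)
    (h𝒢 : ∀ S ∈ 𝒢, S ⊆ V.sym2) (hR : ∀ S ∈ 𝒢, S ∩ (V \ A).sym2 ∈ ℛ)
    (hbad : ∀ S ∈ 𝒢, #{v ∈ V \ A | nbIn S A v ∉ Good} ≤ C) :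
    ∑ S ∈ 𝒢, x ^ #S ≤ 2 ^ #A.sym2 * (2 ^ #A) ^ C *
      (2 * ∑ B ∈ Good, x ^ #B) ^ #V * ∑ S ∈ ℛ, x ^ #S := by
  set R := V \ A with hRdef
  set g := ∑ B ∈ Good, x ^ #B with hg
  have hg1 : 1 ≤ g := by
    have := Finset.single_le_sum (f := fun B : Finset α => x ^ #B) (s := Good)
      (fun _ _ => by positivity) hGood
    simpa using this
  set bad : Finset (Sym2 α) → Finset α := fun S => {v ∈ R | nbIn S A v ∉ Good} with hbaddef
  have hRV : #R ≤ #V := card_le_card sdiff_subset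
  have hℛ : 0 ≤ ∑ S ∈ ℛ, x ^ #S := Finset.sum_nonneg fun _ _ => by positivity
  -- the contribution of one prescribed exceptional set `D`
  have hD : ∀ D ∈ R.powerset, ∑ S ∈ 𝒢 with bad S = D, x ^ #S ≤
      2 ^ #A.sym2 * ((2 ^ #A) ^ C * g ^ #V) * ∑ S ∈ ℛ, x ^ #S := by
    intro D hDR
    rw [mem_powerset] at hDR
    by_cases hDC : #D ≤ C
    swap
    · rw [Finset.filter_eq_empty_iff.2]
      · simp only [sum_empty]; positivity
      · rintro S hS rfl
        exact hDC (hbad S hS)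
    set T : α → Finset (Finset α) := fun v =>
      if v ∈ R then (if v ∈ D then A.powerset else Good) else {∅} with hT
    let φ : Finset (Sym2 α) → (Finset (Sym2 α) × (α → Finset α)) × Finset (Sym2 α) := fun S =>
      ((S ∩ A.sym2, fun v => if v ∈ R then nbIn S A v else ∅), S ∩ R.sym2)
    have hφ : Set.InjOn φ ((𝒢.filter fun S => bad S = D : Finset _) : Set (Finset (Sym2 α))) := by
      intro S hS S' hS' h
      simp only [coe_filter, Set.mem_ofPred_eq] at hS hS'
      simp only [φ, Prod.mk.injEq] at h
      refine eq_of_parts (h𝒢 S hS.1) (h𝒢 S' hS'.1) h.1.1 (fun v hv => ?_) h.2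
      have := congrFun h.1.2 v
      simpa only [if_pos (show v ∈ R from hv)] using this
    calc ∑ S ∈ 𝒢 with bad S = D, x ^ #S
        ≤ ∑ S ∈ 𝒢 with bad S = D, (∏ v, x ^ #((φ S).1.2 v)) * x ^ #(φ S).2 := by
          refine Finset.sum_le_sum fun S hS => ?_
          rw [Finset.prod_pow_eq_pow_sum, ← pow_add]
          refine pow_le_pow_of_le_one hx0.le hx1 ?_
          have := card_parts_le S R A sdiff_disjoint
          simp only [φ]; omega
      _ = ∑ p ∈ (𝒢.filter fun S => bad S = D).image φ, (∏ v, x ^ #(p.1.2 v)) * x ^ #p.2 := by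
          rw [Finset.sum_image hφ]
      _ ≤ ∑ p ∈ (A.sym2.powerset ×ˢ Fintype.piFinset T) ×ˢ ℛ,
            (∏ v, x ^ #(p.1.2 v)) * x ^ #p.2 := by
          refine Finset.sum_le_sum_of_subset_of_nonneg ?_ fun _ _ _ => by positivity
          intro p hp
          obtain ⟨S, hS, rfl⟩ := mem_image.1 hp
          obtain ⟨hS, hSD⟩ := mem_filter.1 hS
          simp only [φ, mem_product, mem_powerset, Fintype.mem_piFinset]
          refine ⟨⟨inter_subset_right, fun v => ?_⟩, hR S hS⟩
          by_cases hv : v ∈ R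
          · simp only [hT, if_pos hv]
            by_cases hvD : v ∈ D
            · rw [if_pos hvD]; exact mem_powerset.2 (nbIn_subset _ _ _)
            · rw [if_neg hvD]
              by_contra hcon
              exact hvD (hSD ▸ mem_filter.2 ⟨hv, hcon⟩)
          · simp [hT, hv]
      _ = 2 ^ #A.sym2 * (∏ v, ∑ B ∈ T v, x ^ #B) * ∑ S ∈ ℛ, x ^ #S := by
          rw [Finset.prod_univ_sum, Finset.sum_product, Finset.sum_product]
          simp only [← Finset.mul_sum, ← Finset.sum_mul]
          simp only [sum_const, card_powerset, nsmul_eq_mul, Nat.cast_pow, Nat.cast_ofNat]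
          ring
      _ ≤ _ := by
          gcongr
          have hle : ∀ v, ∑ B ∈ T v, x ^ #B ≤
              (if v ∈ D then (2 : ℝ) ^ #A else 1) * (if v ∈ R then g else 1) := by
            intro v
            by_cases hv : v ∈ R
            · by_cases hvD : v ∈ D
              · simp only [hT, if_pos hv, if_pos hvD]
                calc ∑ B ∈ A.powerset, x ^ #B ≤ ∑ B ∈ A.powerset, (1 : ℝ) :=
                      Finset.sum_le_sum fun B _ => pow_le_one₀ hx0.le hx1
                  _ = 2 ^ #A := by simp
                  _ ≤ 2 ^ #A * g := le_mul_of_one_le_right (by positivity) hg1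
              · simp [hT, hv, hvD, hg]
            · have hvD : v ∉ D := fun h => hv (hDR h)
              simp [hT, hv, hvD]
          calc ∏ v, ∑ B ∈ T v, x ^ #B
              ≤ ∏ v, ((if v ∈ D then (2 : ℝ) ^ #A else 1) * (if v ∈ R then g else 1)) :=
                Finset.prod_le_prod (fun v _ => Finset.sum_nonneg fun _ _ => by positivity)
                  fun v _ => hle v
            _ = (2 ^ #A) ^ #D * g ^ #R := by
                rw [Finset.prod_mul_distrib]
                simp
            _ ≤ _ := by
                gcongr
                exact one_le_pow₀ (by norm_num)
  calc ∑ S ∈ 𝒢, x ^ #S = ∑ D ∈ R.powerset, ∑ S ∈ 𝒢 with bad S = D, x ^ #S := by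
        rw [Finset.sum_fiberwise_of_maps_to]
        intro S _
        exact mem_powerset.2 (filter_subset _ _)
    _ ≤ ∑ D ∈ R.powerset, 2 ^ #A.sym2 * ((2 ^ #A) ^ C * g ^ #V) * ∑ S ∈ ℛ, x ^ #S :=
        Finset.sum_le_sum hD
    _ = 2 ^ #R * (2 ^ #A.sym2 * ((2 ^ #A) ^ C * g ^ #V) * ∑ S ∈ ℛ, x ^ #S) := by
        simp [card_powerset]
    _ ≤ 2 ^ #V * (2 ^ #A.sym2 * ((2 ^ #A) ^ C * g ^ #V) * ∑ S ∈ ℛ, x ^ #S) := by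
        gcongr
        norm_num
    _ = _ := by rw [mul_pow]; ring

lemma card_small_subsets {α : Type*} [DecidableEq α] (A : Finset α) (t : ℕ) :
    #{B ∈ A.powerset | #B < t} ≤ (#A + 2) ^ t := by
  induction t with
  | zero => simp
  | succ t ih =>
    have h : {B ∈ A.powerset | #B < t + 1} ⊆ {B ∈ A.powerset | #B < t} ∪ powersetCard t A := by
      intro B hB
      simp only [mem_filter, mem_powerset, mem_union, mem_powersetCard] at hB ⊢
      rcases Nat.lt_succ_iff_lt_or_eq.1 hB.2 with h | h
      · exact Or.inl ⟨hB.1, h⟩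
      · exact Or.inr ⟨hB.1, h⟩
    calc _ ≤ _ := card_le_card h
      _ ≤ _ := card_union_le _ _
      _ ≤ (#A + 2) ^ t + (#A + 2) ^ t := by
          rw [card_powersetCard]
          gcongr
          exact (Nat.choose_le_pow _ _).trans (Nat.pow_le_pow_left (by omega) _)
      _ ≤ (#A + 2) ^ (t + 1) := by rw [pow_succ]; nlinarith [pow_pos (show 0 < #A + 2 by omega) t]

lemma sum_small_subsets_le {α : Type*} [DecidableEq α] (A : Finset α) (t : ℕ) {x : ℝ} (hx0 : 0 < x)
    (hx1 : x ≤ 1) : ∑ B ∈ A.powerset with #B < t, x ^ #B ≤ ((#A : ℝ) + 2) ^ t := by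
  calc ∑ B ∈ A.powerset with #B < t, x ^ #B ≤ ∑ B ∈ A.powerset with #B < t, (1 : ℝ) :=
        Finset.sum_le_sum fun B _ => pow_le_one₀ hx0.le hx1
    _ = (#{B ∈ A.powerset | #B < t} : ℝ) := by simp
    _ ≤ _ := by exact_mod_cast card_small_subsets A t

/-- Polynomial growth is beaten by `exp (ε k)`. -/
lemma exists_poly_le_exp (t : ℕ) {b ε : ℝ} (hb : 0 < b) (hε : 0 < ε) :
    ∃ k : ℕ, 1 ≤ k ∧ b * ((k : ℝ) + 2) ^ t ≤ Real.exp (ε * k) := by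
  have h := (isLittleO_pow_exp_pos_mul_atTop t hε).bound
    (c := 1 / (b * Real.exp (ε * 2))) (by positivity)
  have h2 : Filter.Tendsto (fun k : ℕ => (k : ℝ) + 2) Filter.atTop Filter.atTop :=
    Filter.tendsto_atTop_add_const_right _ _ tendsto_natCast_atTop_atTop
  obtain ⟨k, hk, hk1⟩ := ((h2.eventually h).and (Filter.eventually_ge_atTop 1)).exists
  refine ⟨k, hk1, ?_⟩
  rw [Real.norm_of_nonneg (by positivity), Real.norm_of_nonneg (by positivity), mul_add,
    Real.exp_add] at hk
  calc b * ((k : ℝ) + 2) ^ t ≤ b * (1 / (b * Real.exp (ε * 2)) *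
        (Real.exp (ε * k) * Real.exp (ε * 2))) := by gcongr
    _ = Real.exp (ε * k) := by field_simp

/-- Pigeonhole: if more than `M * 2 ^ |A|` vertices of `R` have a property, then `M` of them have
the same neighbourhood in `A`. -/
lemma exists_same_nb {α : Type*} [DecidableEq α] (S : Finset (Sym2 α)) (A R : Finset α) (M : ℕ)
    (h : M * 2 ^ #A < #R) : ∃ Y : Finset α, ∃ U ⊆ R, #U = M ∧ Y ⊆ A ∧ ∀ u ∈ U, nbIn S A u = Y := by
  have := Finset.exists_lt_card_fiber_of_mul_lt_card_of_maps_to (s := R) (t := A.powerset)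
    (f := nbIn S A) (n := M) (fun v _ => mem_powerset.2 (nbIn_subset _ _ _))
    (by rw [card_powerset]; linarith)
  obtain ⟨Y, hY, hM⟩ := this
  obtain ⟨U, hU, hUM⟩ := Finset.exists_subset_card_eq hM.le
  refine ⟨Y, U, hU.trans (filter_subset _ _), hUM, mem_powerset.1 hY, fun u hu => ?_⟩
  exact (mem_filter.1 (hU hu)).2

lemma KFree2.mono {α : Type*} {M : ℕ} {S T : Finset (Sym2 α)} (h : KFree2 M T) (hST : S ⊆ T) :
    KFree2 M S := fun ⟨A, B, hA, hB, hd, hh⟩ =>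
  h ⟨A, B, hA, hB, hd, fun a ha b hb => hST (hh a ha b hb)⟩

lemma KFree3.mono {α : Type*} {t : ℕ} {S T : Finset (Sym2 α)} (h : KFree3 t T) (hST : S ⊆ T) :
    KFree3 t S := fun ⟨A, B, C, hA, hB, hC, d1, d2, d3, h1, h2, h3⟩ =>
  h ⟨A, B, C, hA, hB, hC, d1, d2, d3, fun a ha b hb => hST (h1 a ha b hb),
    fun a ha b hb => hST (h2 a ha b hb), fun a ha b hb => hST (h3 a ha b hb)⟩

/-- In a `K_{M,M}`-free graph few vertices have `M` or more neighbours in a fixed set `A`. -/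
lemma KFree2.card_bad_le {α : Type*} [DecidableEq α] {M : ℕ} {S : Finset (Sym2 α)}
    (h : KFree2 M S) (A R : Finset α) (hRA : Disjoint R A) :
    #{v ∈ R | nbIn S A v ∉ {B ∈ A.powerset | #B < M}} ≤ M * 2 ^ #A := by
  by_contra hcon
  obtain ⟨Y, U, hU, hUM, hYA, hnb⟩ := exists_same_nb S A _ M (not_le.1 hcon)
  by_cases hUe : U = ∅
  · have : M = 0 := by rw [← hUM, hUe]; simp
    subst this
    exact h ⟨∅, ∅, rfl, rfl, by simp, by simp [HasBi]⟩
  obtain ⟨u, hu⟩ := nonempty_iff_ne_empty.2 hUe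
  have hY : M ≤ #Y := by
    have := (mem_filter.1 (hU hu)).2
    rw [hnb u hu] at this
    simpa [hYA] using this
  obtain ⟨Y', hY', hYM⟩ := Finset.exists_subset_card_eq hY
  refine h ⟨U, Y', hUM, hYM, ?_, ?_⟩
  · exact (hRA.mono_left (hU.trans (filter_subset _ _))).mono_right (hY'.trans hYA)
  · intro u hu a ha
    have : a ∈ nbIn S A u := by rw [hnb u hu]; exact hY' ha
    exact (mem_nbIn.1 this).2

/-- In a `K_{t,t,t}`-free graph containing a complete bipartite graph on `A, B`, few vertices have
`t` or more neighbours both in `A` and in `B`. -/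
lemma KFree3.card_bad_le {α : Type*} [DecidableEq α] {t : ℕ} {S : Finset (Sym2 α)}
    (h : KFree3 t S) (A B R : Finset α) (hAB : Disjoint A B) (hRA : Disjoint R (A ∪ B))
    (hS : HasBi S A B) :
    #{v ∈ R | nbIn S (A ∪ B) v ∉ {Y ∈ (A ∪ B).powerset | #(Y ∩ A) < t ∨ #(Y ∩ B) < t}}
      ≤ t * 2 ^ #(A ∪ B) := by
  by_contra hcon
  obtain ⟨Y, U, hU, hUM, hYA, hnb⟩ := exists_same_nb S (A ∪ B) _ t (not_le.1 hcon)
  by_cases hUe : U = ∅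
  · have : t = 0 := by rw [← hUM, hUe]; simp
    subst this
    exact h ⟨∅, ∅, ∅, by simp [HasBi]⟩
  obtain ⟨u, hu⟩ := nonempty_iff_ne_empty.2 hUe
  have hY : t ≤ #(Y ∩ A) ∧ t ≤ #(Y ∩ B) := by
    have := (mem_filter.1 (hU hu)).2
    rw [hnb u hu, mem_filter, mem_powerset] at this
    push Not at this
    exact this hYA
  obtain ⟨A', hA', hAt⟩ := Finset.exists_subset_card_eq hY.1
  obtain ⟨B', hB', hBt⟩ := Finset.exists_subset_card_eq hY.2
  have hUR : U ⊆ R := hU.trans (filter_subset _ _)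
  have hA'A : A' ⊆ A := hA'.trans inter_subset_right
  have hB'B : B' ⊆ B := hB'.trans inter_subset_right
  refine h ⟨A', B', U, hAt, hBt, hUM, (hAB.mono_left hA'A).mono_right hB'B, ?_, ?_, ?_, ?_, ?_⟩
  · exact ((hRA.mono_left hUR).mono_right (hA'A.trans subset_union_left)).symm
  · exact ((hRA.mono_left hUR).mono_right (hB'B.trans subset_union_right)).symm
  · exact fun a ha b hb => hS a (hA'A ha) b (hB'B hb)
  · intro a ha u hu
    have : a ∈ nbIn S (A ∪ B) u := by rw [hnb u hu]; exact (mem_inter.1 (hA' ha)).1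
    rw [Sym2.eq_swap]
    exact (mem_nbIn.1 this).2
  · intro a ha u hu
    have : a ∈ nbIn S (A ∪ B) u := by rw [hnb u hu]; exact (mem_inter.1 (hB' ha)).1
    rw [Sym2.eq_swap]
    exact (mem_nbIn.1 this).2

lemma sum_pow_powerset {α : Type*} [DecidableEq α] (B : Finset α) (x : ℝ) :
    ∑ Y ∈ B.powerset, x ^ #Y = (1 + x) ^ #B := by
  have := Finset.sum_pow_mul_eq_add_pow x 1 B
  simp only [one_pow, mul_one] at this
  rw [this, add_comm]

lemma sum_half_small_le {α : Type*} [DecidableEq α] (A B : Finset α)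
    (t : ℕ) {x : ℝ} (hx0 : 0 < x) (hx1 : x ≤ 1) (hAB : Disjoint A B) :
    ∑ Y ∈ (A ∪ B).powerset with #(Y ∩ A) < t, x ^ #Y ≤ ((#A : ℝ) + 2) ^ t * (1 + x) ^ #B := by
  let φ : Finset α → Finset α × Finset α := fun Y => (Y ∩ A, Y ∩ B)
  have hcard : ∀ Y ⊆ A ∪ B, #Y = #(Y ∩ A) + #(Y ∩ B) := by
    intro Y hY
    rw [← card_union_of_disjoint, ← inter_union_distrib_left, inter_eq_left.2 hY]
    exact (hAB.mono_left inter_subset_right).mono_right inter_subset_right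
  calc ∑ Y ∈ (A ∪ B).powerset with #(Y ∩ A) < t, x ^ #Y
      = ∑ Y ∈ (A ∪ B).powerset with #(Y ∩ A) < t, x ^ #(φ Y).1 * x ^ #(φ Y).2 := by
        refine Finset.sum_congr rfl fun Y hY => ?_
        rw [hcard Y (mem_powerset.1 (mem_filter.1 hY).1), pow_add]
    _ = ∑ p ∈ ({Y ∈ (A ∪ B).powerset | #(Y ∩ A) < t}).image φ, x ^ #p.1 * x ^ #p.2 := by
        rw [Finset.sum_image]
        intro Y hY Z hZ h
        simp only [coe_filter, mem_powerset, Set.mem_ofPred_eq] at hY hZ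
        simp only [φ, Prod.mk.injEq] at h
        rw [← inter_eq_left.2 hY.1, ← inter_eq_left.2 hZ.1, inter_union_distrib_left,
          inter_union_distrib_left, h.1, h.2]
    _ ≤ ∑ p ∈ {Y ∈ A.powerset | #Y < t} ×ˢ B.powerset, x ^ #p.1 * x ^ #p.2 := by
        refine Finset.sum_le_sum_of_subset_of_nonneg ?_ fun _ _ _ => by positivity
        intro p hp
        obtain ⟨Y, hY, rfl⟩ := mem_image.1 hp
        simp only [φ, mem_product, mem_filter, mem_powerset]
        exact ⟨⟨inter_subset_right, (mem_filter.1 hY).2⟩, inter_subset_right⟩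
    _ = (∑ Y ∈ A.powerset with #Y < t, x ^ #Y) * ∑ Y ∈ B.powerset, x ^ #Y := by
        rw [Finset.sum_product, Finset.sum_mul_sum]
    _ ≤ _ := by
        rw [sum_pow_powerset]
        gcongr
        exact sum_small_subsets_le A t hx0 hx1

lemma sum_one_small_le {α : Type*} [DecidableEq α] (A B : Finset α) (M : ℕ) (hA : #A = M)
    (hB : #B = M) (t : ℕ) {x : ℝ} (hx0 : 0 < x) (hx1 : x ≤ 1) (hAB : Disjoint A B) :
    ∑ Y ∈ (A ∪ B).powerset with (#(Y ∩ A) < t ∨ #(Y ∩ B) < t), x ^ #Y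
      ≤ 2 * ((M : ℝ) + 2) ^ t * (1 + x) ^ M := by
  rw [filter_or]
  have h1 := sum_half_small_le A B t hx0 hx1 hAB
  have h2 := sum_half_small_le B A t hx0 hx1 hAB.symm
  rw [union_comm B A] at h2
  rw [hA, hB] at h1 h2
  have h3 := Finset.sum_union_inter (s₁ := {Y ∈ (A ∪ B).powerset | #(Y ∩ A) < t})
    (s₂ := {Y ∈ (A ∪ B).powerset | #(Y ∩ B) < t}) (f := fun Y => x ^ #Y)
  have h4 : 0 ≤ ∑ Y ∈ {Y ∈ (A ∪ B).powerset | #(Y ∩ A) < t} ∩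
    {Y ∈ (A ∪ B).powerset | #(Y ∩ B) < t}, x ^ #Y := Finset.sum_nonneg fun _ _ => by positivity
  linarith

lemma sum_biUnion_le {ι β : Type*} [DecidableEq ι] [DecidableEq β] (s : Finset ι)
    (F : ι → Finset β) (f : β → ℝ) (hf : ∀ b, 0 ≤ f b) :
    ∑ b ∈ s.biUnion F, f b ≤ ∑ i ∈ s, ∑ b ∈ F i, f b := by
  induction s using Finset.induction_on with
  | empty => simp
  | insert a s ha ih =>
    rw [biUnion_insert, Finset.sum_insert ha]
    have h1 := Finset.sum_union_inter (s₁ := F a) (s₂ := s.biUnion F) (f := f)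
    have h2 : 0 ≤ ∑ b ∈ F a ∩ s.biUnion F, f b := Finset.sum_nonneg fun b _ => hf b
    linarith

lemma card_sym2_le {α : Type*} (V : Finset α) : #V.sym2 ≤ (#V + 1) ^ 2 := by
  rw [card_sym2]
  exact Nat.choose_le_pow _ _

lemma sum_sym2_le {α : Type*} [DecidableEq α] (V : Finset α) (k : ℕ) (hV : #V ≤ k)
    (P : Finset (Sym2 α) → Prop) {x : ℝ} (hx0 : 0 < x) (hx1 : x ≤ 1) :
    ∑ S ∈ V.sym2.powerset with P S, x ^ #S ≤ 2 ^ (k + 1) ^ 2 := by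
  calc ∑ S ∈ V.sym2.powerset with P S, x ^ #S ≤ ∑ S ∈ V.sym2.powerset, x ^ #S :=
        Finset.sum_le_sum_of_subset_of_nonneg (filter_subset _ _) fun _ _ _ => by positivity
    _ = (1 + x) ^ #V.sym2 := sum_pow_powerset _ _
    _ ≤ 2 ^ #V.sym2 := by gcongr; linarith
    _ ≤ 2 ^ (k + 1) ^ 2 := by
        gcongr
        · norm_num
        · exact (card_sym2_le V).trans (by gcongr)

/-- There are `exp (o(n²))` graphs without `K_{M,M}`. -/
lemma KFree2_bound (M : ℕ) {ε : ℝ} (hε : 0 < ε) : ∃ K : ℝ, 0 ≤ K ∧ ∀ (N : ℕ) (x : ℝ), 0 < x →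
    x ≤ 1 → ∀ V : Finset (Fin N), ∑ S ∈ V.sym2.powerset with KFree2 M S, x ^ #S
      ≤ Real.exp (ε * (#V : ℝ) ^ 2 + K * #V + K) := by
  rcases Nat.eq_zero_or_pos M with rfl | hM
  · refine ⟨0, le_rfl, fun N x _ _ V => ?_⟩
    rw [filter_false_of_mem, sum_empty]
    · positivity
    · exact fun S _ h => h ⟨∅, ∅, rfl, rfl, by simp, by simp [HasBi]⟩
  obtain ⟨k, hk1, hk⟩ := exists_poly_le_exp M (b := 2) (by norm_num) hε
  set D : ℝ := 2 ^ (k + 1) ^ 2 * (2 ^ k) ^ (M * 2 ^ k) with hD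
  have hD1 : 1 ≤ D := by
    rw [hD]
    exact one_le_mul_of_one_le_of_one_le (one_le_pow₀ (by norm_num))
      (one_le_pow₀ (one_le_pow₀ (by norm_num)))
  have hD2 : 2 ^ (k + 1) ^ 2 ≤ D := le_mul_of_one_le_right (by positivity)
    (one_le_pow₀ (one_le_pow₀ (by norm_num)))
  have hDpos : 0 < D := by linarith
  refine ⟨Real.log D, Real.log_nonneg hD1, fun N x hx0 hx1 V => ?_⟩
  have hK := Real.log_nonneg hD1
  induction hn : #V using Nat.strong_induction_on generalizing V with | _ n ih => ?_
  rcases lt_or_ge n k with hnk | hnk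
  · calc _ ≤ (2 : ℝ) ^ (k + 1) ^ 2 := sum_sym2_le V k (by omega) _ hx0 hx1
      _ ≤ D := hD2
      _ = Real.exp (Real.log D) := (Real.exp_log hDpos).symm
      _ ≤ _ := by
          apply Real.exp_le_exp.2
          have : 0 ≤ ε * (n : ℝ) ^ 2 + Real.log D * n := by positivity
          linarith
  obtain ⟨A, hAV, hA⟩ := Finset.exists_subset_card_eq (hn ▸ hnk : k ≤ #V)
  have hstep := weight_step hx0 hx1 V A {S ∈ V.sym2.powerset | KFree2 M S}
    {S ∈ (V \ A).sym2.powerset | KFree2 M S} {B ∈ A.powerset | #B < M} (by simp [hM])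
    (M * 2 ^ k) (fun S hS => mem_powerset.1 (mem_filter.1 hS).1)
    (fun S hS => mem_filter.2 ⟨mem_powerset.2 inter_subset_right,
      (mem_filter.1 hS).2.mono inter_subset_left⟩)
    (fun S hS => by
      have := (mem_filter.1 hS).2.card_bad_le A (V \ A) sdiff_disjoint
      rwa [hA] at this)
  have hVA : #(V \ A) = n - k := by rw [card_sdiff_of_subset hAV, hA, hn]
  have hih := ih (n - k) (by omega) (V \ A) hVA
  have hg : 2 * ∑ B ∈ A.powerset with #B < M, x ^ #B ≤ Real.exp (ε * k) := by
    refine le_trans ?_ hk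
    have := sum_small_subsets_le A M hx0 hx1
    rw [hA] at this
    linarith
  have hg0 : 0 ≤ ∑ B ∈ A.powerset with #B < M, x ^ #B := Finset.sum_nonneg fun _ _ => by positivity
  calc _ ≤ _ := hstep
    _ ≤ D * Real.exp (ε * k) ^ n *
        Real.exp (ε * ((n - k : ℕ) : ℝ) ^ 2 + Real.log D * (n - k : ℕ) + Real.log D) := by
        rw [hA, hn, hD]
        gcongr
        · norm_num
        · exact (card_sym2_le A).trans (by rw [hA])
    _ = Real.exp (Real.log D + n * (ε * k) +
        (ε * ((n - k : ℕ) : ℝ) ^ 2 + Real.log D * (n - k : ℕ) + Real.log D)) := by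
        rw [Real.exp_add (Real.log D + _), Real.exp_add (Real.log D), Real.exp_log hDpos,
          Real.exp_nat_mul]
    _ ≤ _ := by
        apply Real.exp_le_exp.2
        rw [Nat.cast_sub hnk]
        have h1 : (k : ℝ) ≤ n := by exact_mod_cast hnk
        have h2 : (1 : ℝ) ≤ k := by exact_mod_cast hk1
        have h3 : 0 ≤ ε * (k * ((n : ℝ) - k)) := by
          have : 0 ≤ (n : ℝ) - k := by linarith
          positivity
        have h4 : 0 ≤ Real.log D * ((k : ℝ) - 1) := mul_nonneg hK (by linarith)
        nlinarith

/-- The weighted number of graphs without `K_{t,t,t}` is at most `(1 + x) ^ (n²/4 + o(n²))`. -/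
lemma KFree3_bound (t : ℕ) (ht : 1 ≤ t) {ε x : ℝ} (hε : 0 < ε) (hx0 : 0 < x) (hx1 : x ≤ 1) :
    ∃ K : ℝ, 0 ≤ K ∧ ∀ (N : ℕ) (V : Finset (Fin N)), ∑ S ∈ V.sym2.powerset with KFree3 t S, x ^ #S
      ≤ Real.exp ((Real.log (1 + x) / 4 + ε) * (#V : ℝ) ^ 2 + K * #V + K) := by
  obtain ⟨M, hM1, hM⟩ := exists_poly_le_exp t (b := 16) (by norm_num) hε
  obtain ⟨K₁, hK₁, hW⟩ := KFree2_bound M hε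
  set T := Real.log (1 + x) with hT
  have hT0 : 0 ≤ T := Real.log_nonneg (by linarith)
  set D : ℝ := 2 * (2 ^ (2 * M + 1) ^ 2 * (2 ^ (2 * M)) ^ (t * 2 ^ (2 * M))) with hD
  have hD1 : 1 ≤ D := by
    rw [hD]
    exact one_le_mul_of_one_le_of_one_le (by norm_num) (one_le_mul_of_one_le_of_one_le
      (one_le_pow₀ (by norm_num)) (one_le_pow₀ (one_le_pow₀ (by norm_num))))
  have hDpos : 0 < D := by linarith
  have hL := Real.log_nonneg hD1
  set K := K₁ + 1 + Real.log D + T * M ^ 2 with hK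
  have hK0 : 0 ≤ K := by positivity
  have hlog2 : Real.log 2 ≤ 1 := by have := Real.log_two_lt_d9; linarith
  refine ⟨K, hK0, fun N V => ?_⟩
  induction hn : #V using Nat.strong_induction_on generalizing V with | _ n ih => ?_
  -- either the graph is `K_{M,M}`-free, or some pair `(A, B)` spans a `K_{M,M}`
  let pairs : Finset (Finset (Fin N) × Finset (Fin N)) :=
    {p ∈ V.powerset ×ˢ V.powerset | #p.1 = M ∧ #p.2 = M ∧ Disjoint p.1 p.2}
  have hM0 : 0 < M := hM1
  have hcover : {S ∈ V.sym2.powerset | KFree3 t S} ⊆ {S ∈ V.sym2.powerset | KFree2 M S} ∪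
      pairs.biUnion fun p => {S ∈ V.sym2.powerset | KFree3 t S ∧ HasBi S p.1 p.2} := by
    intro S hS
    obtain ⟨hSV, hS3⟩ := mem_filter.1 hS
    by_cases hS2 : KFree2 M S
    · exact mem_union_left _ (mem_filter.2 ⟨hSV, hS2⟩)
    · obtain ⟨A, B, hA, hB, hd, hAB⟩ := not_not.1 hS2
      refine mem_union_right _ (mem_biUnion.2 ⟨(A, B), ?_, mem_filter.2 ⟨hSV, hS3, hAB⟩⟩)
      simp only [pairs, mem_filter, mem_product, mem_powerset]
      obtain ⟨a₀, ha₀⟩ := card_pos.1 (hA ▸ hM0)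
      obtain ⟨b₀, hb₀⟩ := card_pos.1 (hB ▸ hM0)
      refine ⟨⟨fun a ha => ?_, fun b hb => ?_⟩, hA, hB, hd⟩
      · exact (mk_mem_sym2_iff.1 (mem_powerset.1 hSV (hAB a ha b₀ hb₀))).1
      · exact (mk_mem_sym2_iff.1 (mem_powerset.1 hSV (hAB a₀ ha₀ b hb))).2
  have hsum : ∑ S ∈ V.sym2.powerset with KFree3 t S, x ^ #S ≤
      ∑ S ∈ V.sym2.powerset with KFree2 M S, x ^ #S +
      ∑ p ∈ pairs, ∑ S ∈ V.sym2.powerset with (KFree3 t S ∧ HasBi S p.1 p.2), x ^ #S := by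
    refine (Finset.sum_le_sum_of_subset_of_nonneg hcover fun _ _ _ => by positivity).trans ?_
    have h1 := Finset.sum_union_inter (s₁ := {S ∈ V.sym2.powerset | KFree2 M S})
      (s₂ := pairs.biUnion fun p => {S ∈ V.sym2.powerset | KFree3 t S ∧ HasBi S p.1 p.2})
      (f := fun S => x ^ #S)
    have h2 : ∑ S ∈ pairs.biUnion fun p => {S ∈ V.sym2.powerset | KFree3 t S ∧ HasBi S p.1 p.2},
        x ^ #S ≤ ∑ p ∈ pairs, ∑ S ∈ V.sym2.powerset with (KFree3 t S ∧ HasBi S p.1 p.2), x ^ #S :=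
      sum_biUnion_le pairs _ _ fun _ => by positivity
    have h3 : 0 ≤ ∑ S ∈ {S ∈ V.sym2.powerset | KFree2 M S} ∩ pairs.biUnion fun p =>
        {S ∈ V.sym2.powerset | KFree3 t S ∧ HasBi S p.1 p.2}, x ^ #S :=
      Finset.sum_nonneg fun _ _ => by positivity
    linarith
  set target := Real.exp ((T / 4 + ε) * (n : ℝ) ^ 2 + K * n + K) with htarget
  have hhalf1 : ∑ S ∈ V.sym2.powerset with KFree2 M S, x ^ #S ≤ target / 2 := by
    refine (hW N x hx0 hx1 V).trans ?_
    rw [le_div_iff₀ (by norm_num), htarget, hn]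
    refine (mul_le_mul_of_nonneg_left (Real.exp_log (show (0 : ℝ) < 2 by norm_num)).ge
      (Real.exp_pos _).le).trans ?_
    rw [← Real.exp_add]
    apply Real.exp_le_exp.2
    have h1 : K₁ ≤ K := by rw [hK]; nlinarith [mul_nonneg hT0 (sq_nonneg (M : ℝ))]
    have h2 : K₁ * n ≤ K * n := by gcongr
    have h3 : 0 ≤ T / 4 * (n : ℝ) ^ 2 := by positivity
    have h4 : K₁ + 1 ≤ K := by rw [hK]; nlinarith [mul_nonneg hT0 (sq_nonneg (M : ℝ))]
    linarith
  have hhalf2 : ∑ p ∈ pairs, ∑ S ∈ V.sym2.powerset with (KFree3 t S ∧ HasBi S p.1 p.2), x ^ #S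
      ≤ target / 2 := by
    have hp : ∀ p ∈ pairs, ∑ S ∈ V.sym2.powerset with (KFree3 t S ∧ HasBi S p.1 p.2), x ^ #S ≤
        (1 / 4) ^ n * (target / 2) := by
      rintro ⟨A, B⟩ hp
      simp only [pairs, mem_filter, mem_product, mem_powerset] at hp
      obtain ⟨⟨hAV, hBV⟩, hA, hB, hd⟩ := hp
      have hABV : A ∪ B ⊆ V := union_subset hAV hBV
      have hAB : #(A ∪ B) = 2 * M := by rw [card_union_of_disjoint hd, hA, hB]; ring
      have hnM : 2 * M ≤ n := by rw [← hAB, ← hn]; exact card_le_card hABV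
      have hstep := weight_step hx0 hx1 V (A ∪ B)
        {S ∈ V.sym2.powerset | KFree3 t S ∧ HasBi S A B}
        {S ∈ (V \ (A ∪ B)).sym2.powerset | KFree3 t S}
        {Y ∈ (A ∪ B).powerset | #(Y ∩ A) < t ∨ #(Y ∩ B) < t}
        (mem_filter.2 ⟨by simp, Or.inl (by simp; omega)⟩)
        (t * 2 ^ (2 * M)) (fun S hS => mem_powerset.1 (mem_filter.1 hS).1)
        (fun S hS => mem_filter.2 ⟨mem_powerset.2 inter_subset_right,
          (mem_filter.1 hS).2.1.mono inter_subset_left⟩)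
        (fun S hS => by
          have := (mem_filter.1 hS).2.1.card_bad_le A B (V \ (A ∪ B)) hd sdiff_disjoint
            (mem_filter.1 hS).2.2
          rwa [hAB] at this)
      have hVA : #(V \ (A ∪ B)) = n - 2 * M := by rw [card_sdiff_of_subset hABV, hAB, hn]
      have hih := ih (n - 2 * M) (by omega) (V \ (A ∪ B)) hVA
      have hg := sum_one_small_le A B M hA hB t hx0 hx1 hd
      have hg' : 2 * ∑ Y ∈ (A ∪ B).powerset with (#(Y ∩ A) < t ∨ #(Y ∩ B) < t), x ^ #Y ≤
          1 / 4 * Real.exp (ε * M + M * T) := by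
        rw [Real.exp_add, Real.exp_nat_mul, hT, Real.exp_log (by linarith)]
        have : 16 * ((M : ℝ) + 2) ^ t * (1 + x) ^ M ≤ Real.exp (ε * M) * (1 + x) ^ M := by
          gcongr
        linarith
      have hg0 : 0 ≤ ∑ Y ∈ (A ∪ B).powerset with (#(Y ∩ A) < t ∨ #(Y ∩ B) < t), x ^ #Y :=
        Finset.sum_nonneg fun _ _ => by positivity
      calc _ ≤ _ := hstep
        _ ≤ (2 ^ (2 * M + 1) ^ 2 * (2 ^ (2 * M)) ^ (t * 2 ^ (2 * M))) *
            (1 / 4 * Real.exp (ε * M + M * T)) ^ n *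
            Real.exp ((T / 4 + ε) * ((n - 2 * M : ℕ) : ℝ) ^ 2 + K * (n - 2 * M : ℕ) + K) := by
            rw [hAB, hn]
            gcongr
            · norm_num
            · exact (card_sym2_le _).trans (by rw [hAB])
        _ = (1 / 4) ^ n * (D * Real.exp (ε * M + M * T) ^ n *
            Real.exp ((T / 4 + ε) * ((n - 2 * M : ℕ) : ℝ) ^ 2 + K * (n - 2 * M : ℕ) + K) / 2) := by
            rw [mul_pow, hD]; ring
        _ = (1 / 4) ^ n * (Real.exp (Real.log D + n * (ε * M + M * T) +
            ((T / 4 + ε) * ((n - 2 * M : ℕ) : ℝ) ^ 2 + K * (n - 2 * M : ℕ) + K)) / 2) := by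
            rw [Real.exp_add (Real.log D + _), Real.exp_add (Real.log D), Real.exp_log hDpos,
              Real.exp_nat_mul]
        _ ≤ _ := by
            rw [htarget]
            refine mul_le_mul_of_nonneg_left (div_le_div_of_nonneg_right (Real.exp_le_exp.2 ?_)
              (by norm_num)) (by positivity)
            rw [Nat.cast_sub hnM]
            push_cast
            have h1 : 2 * (M : ℝ) ≤ n := by exact_mod_cast hnM
            have h2 : (1 : ℝ) ≤ M := by exact_mod_cast hM1
            have h3 : 0 ≤ ε * (M * ((n : ℝ) - 2 * M)) := by
              have : 0 ≤ (n : ℝ) - 2 * M := by linarith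
              positivity
            have h4 : 0 ≤ K * ((M : ℝ) - 1) := mul_nonneg hK0 (by linarith)
            have h5 : Real.log D + T * M ^ 2 ≤ K := by rw [hK]; linarith
            have h6 : 0 ≤ ε * ((M : ℝ) * n) := by positivity
            nlinarith
    calc _ ≤ ∑ p ∈ pairs, (1 / 4 : ℝ) ^ n * (target / 2) := Finset.sum_le_sum hp
      _ = #pairs * ((1 / 4 : ℝ) ^ n * (target / 2)) := by simp
      _ ≤ (4 : ℝ) ^ n * ((1 / 4 : ℝ) ^ n * (target / 2)) := by
          gcongr
          have : #pairs ≤ 4 ^ n := by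
            refine (card_filter_le _ _).trans ?_
            rw [card_product, card_powerset, hn, ← mul_pow]; norm_num
          exact_mod_cast this
      _ = target / 2 := by
          rw [← mul_assoc, ← mul_pow]; norm_num
  linarith

/-! ### Graphs without induced 5-cycles -/

/-- `G` contains an induced 5-cycle. The five vertices are automatically distinct. -/
def HasC5 {V : Type*} (G : SimpleGraph V) : Prop :=
  ∃ a b c d e : V, G.Adj a b ∧ G.Adj b c ∧ G.Adj c d ∧ G.Adj d e ∧ G.Adj e a ∧
    ¬ G.Adj a c ∧ ¬ G.Adj b d ∧ ¬ G.Adj c e ∧ ¬ G.Adj d a ∧ ¬ G.Adj e b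

lemma HasC5.of_compl {V : Type*} {G : SimpleGraph V} (h : HasC5 Gᶜ) : HasC5 G := by
  obtain ⟨a, b, c, d, e, h1, h2, h3, h4, h5, g1, g2, g3, g4, g5⟩ := h
  have hac : a ≠ c := by rintro rfl; exact g4 h3.symm
  have hbd : b ≠ d := by rintro rfl; exact g5 h4.symm
  have hce : c ≠ e := by rintro rfl; exact g1 h5.symm
  have hda : d ≠ a := by rintro rfl; exact g2 h1.symm
  have heb : e ≠ b := by rintro rfl; exact g3 h2.symm
  simp only [compl_adj] at *
  refine ⟨a, c, e, b, d, ?_⟩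
  have := G.adj_comm
  tauto

lemma not_isPerfect_of_hasC5 {V : Type} {G : SimpleGraph V} (h : HasC5 G) : ¬ IsPerfect G := by
  obtain ⟨a, b, c, d, e, h1, h2, h3, h4, h5, g1, g2, g3, g4, g5⟩ := h
  intro hP
  set s : Set V := {a, b, c, d, e} with hs
  have ha : a ∈ s := by simp [hs]
  have hb : b ∈ s := by simp [hs]
  have hc : c ∈ s := by simp [hs]
  have hd : d ∈ s := by simp [hs]
  have he : e ∈ s := by simp [hs]
  have hfin : Finite s := by rw [hs]; exact Set.toFinite _
  have hω : (G.induce s).cliqueNum ≤ 2 := by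
    by_contra hcon
    obtain ⟨t, ht⟩ := (G.induce s).exists_isNClique_cliqueNum
    have hnot : ¬ (G.induce s).CliqueFree 3 := fun hf =>
      (hf.mono (by omega : 3 ≤ (G.induce s).cliqueNum)) t ht
    simp only [CliqueFree, not_forall, not_not] at hnot
    obtain ⟨t, ht⟩ := hnot
    rw [is3Clique_iff] at ht
    obtain ⟨⟨u, hu⟩, ⟨v, hv⟩, ⟨w, hw⟩, huv, huw, hvw, -⟩ := ht
    simp only [comap_adj, Function.Embedding.subtype_apply] at huv huw hvw
    simp only [hs, Set.mem_insert_iff, Set.mem_singleton_iff] at hu hv hw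
    have hsym := G.adj_comm
    have hirr := fun v => G.irrefl (v := v)
    rcases hu with rfl | rfl | rfl | rfl | rfl <;> rcases hv with rfl | rfl | rfl | rfl | rfl <;>
      first
      | exact hirr _ huv
      | (exfalso; have := huv.symm; contradiction)
      | (rcases hw with rfl | rfl | rfl | rfl | rfl <;>
          first
          | exact hirr _ huw
          | exact hirr _ hvw
          | (have := huw.symm; have := hvw.symm; contradiction))
  have hcol : (G.induce s).Colorable 2 := by
    rw [← chromaticNumber_le_iff_colorable, hP s]
    exact_mod_cast hω
  obtain ⟨C⟩ := hcol
  have k : ∀ {u v : V} (hu : u ∈ s) (hv : v ∈ s), G.Adj u v → C ⟨u, hu⟩ ≠ C ⟨v, hv⟩ :=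
    fun hu hv huv => C.valid (by simpa using huv)
  have k1 := k ha hb h1
  have k2 := k hb hc h2
  have k3 := k hc hd h3
  have k4 := k hd he h4
  have k5 := k he ha h5
  omega

/-- A graph with all prescribed adjacencies between three groups of vertices, of sizes `3`, `2^3`
and `2^11`, contains an induced 5-cycle whatever its edges inside the groups are. -/
lemma hasC5_of_universal {V : Type*} {G : SimpleGraph V} (a : Fin 3 → V)
    (b : Finset (Fin 3) → V) (c : Finset (Fin 3 ⊕ Finset (Fin 3)) → V)
    (hab : ∀ i J, G.Adj (a i) (b J) ↔ i ∈ J) (hac : ∀ i U, G.Adj (a i) (c U) ↔ Sum.inl i ∈ U)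
    (hbc : ∀ J U, G.Adj (b J) (c U) ↔ Sum.inr J ∈ U) : HasC5 G := by
  have hba : ∀ i J, G.Adj (b J) (a i) ↔ i ∈ J := fun i J => by rw [G.adj_comm, hab]
  have hca : ∀ i U, G.Adj (c U) (a i) ↔ Sum.inl i ∈ U := fun i U => by rw [G.adj_comm, hac]
  have hcb : ∀ J U, G.Adj (c U) (b J) ↔ Sum.inr J ∈ U := fun i U => by rw [G.adj_comm, hbc]
  -- The four ways to split a 5-cycle into two pairs and a single vertex, by the type of the pairs.
  have case1 : ∀ i j J J', i ≠ j → J ≠ J' → G.Adj (a i) (a j) → G.Adj (b J) (b J') →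
      i ∈ J → j ∉ J → i ∉ J' → j ∉ J' → HasC5 G := by
    intro i j J J' hij hJ h1 h2 h3 h4 h5 h6
    refine ⟨a j, a i, b J, b J', c {Sum.inl j, Sum.inr J'}, h1.symm, ?_⟩
    simp only [hab, hba, hca, hbc]
    simp [*]
  have case2 : ∀ i j J J', i ≠ j → J ≠ J' → G.Adj (a i) (a j) → ¬ G.Adj (b J) (b J') →
      i ∈ J → j ∉ J → i ∉ J' → j ∈ J' → HasC5 G := by
    intro i j J J' hij hJ h1 h2 h3 h4 h5 h6
    refine ⟨a j, a i, b J, c {Sum.inr J, Sum.inr J'}, b J', h1.symm, ?_⟩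
    simp only [hab, hba, hac, hca, hbc, hcb]
    simp [*]
  have case3 : ∀ i j J J', i ≠ j → J ≠ J' → ¬ G.Adj (a i) (a j) → G.Adj (b J) (b J') →
      i ∈ J → j ∉ J → i ∉ J' → j ∈ J' → HasC5 G := by
    intro i j J J' hij hJ h1 h2 h3 h4 h5 h6
    rw [G.adj_comm] at h1
    refine ⟨a i, b J, b J', a j, c {Sum.inl i, Sum.inl j}, ?_⟩
    simp only [hab, hba, hac, hca, hbc, hcb]
    simp [*]
  have case4 : ∀ i j J J', i ≠ j → J ≠ J' → ¬ G.Adj (a i) (a j) → ¬ G.Adj (b J) (b J') →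
      i ∈ J → j ∈ J → i ∈ J' → j ∉ J' → HasC5 G := by
    intro i j J J' hij hJ h1 h2 h3 h4 h5 h6
    rw [G.adj_comm] at h1
    refine ⟨a j, b J, a i, b J', c {Sum.inl j, Sum.inr J'}, ?_⟩
    simp only [hab, hba, hac, hca, hbc, hcb]
    simp [*]
  -- a vertex `a p` with a neighbour `a q` and a non-neighbour `a r`
  have mixed : ∀ p q r, p ≠ q → p ≠ r → q ≠ r → G.Adj (a p) (a q) → ¬ G.Adj (a p) (a r) →
      HasC5 G := by
    intro p q r hpq hpr hqr h1 h2
    have hne : ({p, r} : Finset (Fin 3)) ≠ {r} := by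
      intro h
      have : p ∈ ({r} : Finset (Fin 3)) := by rw [← h]; simp
      simp [hpr] at this
    by_cases hb : G.Adj (b {p, r}) (b {r})
    · exact case1 p q {p, r} {r} hpq hne h1 hb (by simp) (by simp [hpq.symm, hqr]) (by simp [hpr])
        (by simp [hqr])
    · exact case4 r p {p, r} {r} hpr.symm hne (fun h => h2 h.symm) hb (by simp) (by simp) (by simp)
        (by simp [hpr])
  by_cases h01 : G.Adj (a 0) (a 1) <;> by_cases h02 : G.Adj (a 0) (a 2)
  · by_cases h12 : G.Adj (a 1) (a 2)
    · by_cases hb : G.Adj (b {0}) (b {1})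
      · exact case1 0 2 {0} {1} (by decide) (by decide) h02 hb (by decide) (by decide) (by decide)
          (by decide)
      · exact case2 0 1 {0} {1} (by decide) (by decide) h01 hb (by decide) (by decide) (by decide)
          (by decide)
    · exact mixed 1 0 2 (by decide) (by decide) (by decide) h01.symm h12
  · exact mixed 0 1 2 (by decide) (by decide) (by decide) h01 h02
  · exact mixed 0 2 1 (by decide) (by decide) (by decide) h02 h01
  · by_cases h12 : G.Adj (a 1) (a 2)
    · exact mixed 1 2 0 (by decide) (by decide) (by decide) h12 (fun h => h01 h.symm)
    · by_cases hb : G.Adj (b {1, 2}) (b {0, 2})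
      · exact case3 1 0 {1, 2} {0, 2} (by decide) (by decide) (fun h => h01 h.symm) hb (by decide)
          (by decide) (by decide) (by decide)
      · exact case4 2 1 {1, 2} {0, 2} (by decide) (by decide) (fun h => h12 h.symm) hb (by decide)
          (by decide) (by decide) (by decide)

/-- The number of vertices needed in the largest group of `hasC5_of_universal`. -/
def tC5 : ℕ := 2 ^ 11

/-- A set of pairs shattered by a family of graphs without induced 5-cycle contains no
`K_{t,t,t}`. -/
lemma KFree3_of_shatters {n : ℕ} (ℱ : Finset (SimpleGraph (Fin n)))
    (hℱ : ∀ G ∈ ℱ, ¬ HasC5 G) (S : Finset (Sym2 (Fin n)))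
    (hS : (ℱ.image fun G => G.edgeFinset).Shatters S) : KFree3 tC5 S := by
  rintro ⟨A, B, C, hA, hB, hC, dAB, dAC, dBC, hAB, hAC, hBC⟩
  have emb : ∀ (β : Type) [Fintype β] (X : Finset (Fin n)), Fintype.card β ≤ #X →
      ∃ f : β → Fin n, Function.Injective f ∧ ∀ i, f i ∈ X := by
    intro β _ X h
    have : Nonempty (β ↪ X) := by
      apply Function.Embedding.nonempty_of_card_le
      simpa using h
    obtain ⟨f⟩ := this
    exact ⟨fun i => f i, fun i j h => f.injective (Subtype.ext h), fun i => (f i).2⟩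
  obtain ⟨a, ha, haA⟩ := emb (Fin 3) A (by rw [hA]; simp [tC5])
  obtain ⟨b, hb, hbB⟩ := emb (Finset (Fin 3)) B (by rw [hB]; simp [tC5])
  obtain ⟨c, hc, hcC⟩ := emb (Finset (Fin 3 ⊕ Finset (Fin 3))) C (by rw [hC]; simp [tC5])
  have nab : ∀ i J, a i ≠ b J := fun i J h => Finset.disjoint_left.1 dAB (haA i) (h ▸ hbB J)
  have nac : ∀ i J, a i ≠ c J := fun i J h => Finset.disjoint_left.1 dAC (haA i) (h ▸ hcC J)
  have nbc : ∀ i J, b i ≠ c J := fun i J h => Finset.disjoint_left.1 dBC (hbB i) (h ▸ hcC J)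
  let P : Sym2 (Fin n) → Prop := fun e =>
    (∃ i J, i ∈ J ∧ e = s(a i, b J)) ∨ (∃ i U, Sum.inl i ∈ U ∧ e = s(a i, c U)) ∨
      (∃ J U, Sum.inr J ∈ U ∧ e = s(b J, c U))
  obtain ⟨E, hE, hSE⟩ := hS (filter_subset P S)
  obtain ⟨G, hG, rfl⟩ := mem_image.1 hE
  have key : ∀ u v, s(u, v) ∈ S → (G.Adj u v ↔ P s(u, v)) := by
    intro u v huv
    have := Finset.ext_iff.1 hSE s(u, v)
    simpa [huv] using this
  refine hℱ G hG (hasC5_of_universal a b c (fun i J => ?_) (fun i J => ?_) (fun i J => ?_))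
  · rw [key _ _ (hAB _ (haA i) _ (hbB J))]
    simp only [P, Sym2.eq_iff]
    constructor
    · rintro (⟨i', J', h, h' | h'⟩ | ⟨i', J', h, h' | h'⟩ | ⟨i', J', h, h' | h'⟩)
      · rwa [ha h'.1, hb h'.2]
      · exact absurd h'.1 (nab _ _)
      · exact absurd h'.2 (nbc _ _)
      · exact absurd h'.1 (nac _ _)
      · exact absurd h'.1 (nab _ _)
      · exact absurd h'.1 (nac _ _)
    · exact fun h => Or.inl ⟨i, J, h, Or.inl ⟨rfl, rfl⟩⟩
  · rw [key _ _ (hAC _ (haA i) _ (hcC J))]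
    simp only [P, Sym2.eq_iff]
    constructor
    · rintro (⟨i', J', h, h' | h'⟩ | ⟨i', J', h, h' | h'⟩ | ⟨i', J', h, h' | h'⟩)
      · exact absurd h'.2.symm (nbc _ _)
      · exact absurd h'.1 (nab _ _)
      · rwa [ha h'.1, hc h'.2]
      · exact absurd h'.1 (nac _ _)
      · exact absurd h'.1 (nab _ _)
      · exact absurd h'.1 (nac _ _)
    · exact fun h => Or.inr (Or.inl ⟨i, J, h, Or.inl ⟨rfl, rfl⟩⟩)
  · rw [key _ _ (hBC _ (hbB i) _ (hcC J))]
    simp only [P, Sym2.eq_iff]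
    constructor
    · rintro (⟨i', J', h, h' | h'⟩ | ⟨i', J', h, h' | h'⟩ | ⟨i', J', h, h' | h'⟩)
      · exact absurd h'.1.symm (nab _ _)
      · exact absurd h'.2.symm (nac _ _)
      · exact absurd h'.1.symm (nab _ _)
      · exact absurd h'.1 (nbc _ _)
      · rwa [hb h'.1, hc h'.2]
      · exact absurd h'.1 (nbc _ _)
    · exact fun h => Or.inr (Or.inr ⟨i, J, h, Or.inl ⟨rfl, rfl⟩⟩)

lemma edgeCount_eq {n : ℕ} (G : SimpleGraph (Fin n)) : edgeCount G = #G.edgeFinset := by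
  rw [edgeCount, Nat.card_eq_fintype_card, edgeFinset_card]

/-- A family of graphs without induced 5-cycle, all with `m` edges, has at most
`x ^ (-m) * (1 + x) ^ (n²/4 + o(n²))` members. -/
lemma card_C5free_le {ε x : ℝ} (hε : 0 < ε) (hx0 : 0 < x) (hx1 : x ≤ 1) :
    ∃ K : ℝ, 0 ≤ K ∧ ∀ (n m : ℕ) (ℱ : Finset (SimpleGraph (Fin n))),
      (∀ G ∈ ℱ, ¬ HasC5 G) → (∀ G ∈ ℱ, edgeCount G = m) →
      (#ℱ : ℝ) * x ^ m ≤ Real.exp ((Real.log (1 + x) / 4 + ε) * (n : ℝ) ^ 2 + K * n + K) := by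
  obtain ⟨K, hK, h⟩ := KFree3_bound tC5 (by simp [tC5]) hε hx0 hx1
  refine ⟨K, hK, fun n m ℱ hℱ hm => ?_⟩
  have hinj : Set.InjOn (fun G : SimpleGraph (Fin n) => G.edgeFinset) ℱ := by
    intro G _ H _ hGH
    exact edgeFinset_inj.1 hGH
  calc (#ℱ : ℝ) * x ^ m = ∑ G ∈ ℱ, x ^ #G.edgeFinset := by
        rw [Finset.sum_congr rfl (g := fun _ => x ^ m)]
        · simp
        · intro G hG
          rw [← edgeCount_eq, hm G hG]
    _ = ∑ S ∈ ℱ.image fun G => G.edgeFinset, x ^ #S := by rw [Finset.sum_image hinj]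
    _ ≤ ∑ S ∈ (ℱ.image fun G => G.edgeFinset).shatterer, x ^ #S :=
        sum_pow_le_sum_shatterer hx0.le hx1 _
    _ ≤ ∑ S ∈ (univ : Finset (Fin n)).sym2.powerset with KFree3 tC5 S, x ^ #S := by
        refine Finset.sum_le_sum_of_subset_of_nonneg ?_ fun _ _ _ => by positivity
        intro S hS
        exact mem_filter.2 ⟨by simp, KFree3_of_shatters ℱ hℱ S (mem_shatterer.1 hS)⟩
    _ ≤ _ := by simpa using h n univ

/-! ### Two families of perfect graphs -/

/-- Vertices are labelled `0, 1, 2`: the classes `0` and `1` are independent, class `2` is a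
clique completely joined to class `1`, and the edges between class `0` and the rest are
arbitrary. -/
def JoinSplit {V : Type} (G : SimpleGraph V) (p : V → Fin 3) : Prop :=
  (∀ u v, p u = 0 → p v = 0 → ¬ G.Adj u v) ∧ (∀ u v, p u = 1 → p v = 1 → ¬ G.Adj u v) ∧
    (∀ u v, p u = 2 → p v ≠ 0 → u ≠ v → G.Adj u v)

/-- The complementary family to `JoinSplit`. -/
def CoJoinSplit {V : Type} (G : SimpleGraph V) (p : V → Fin 3) : Prop :=
  (∀ u v, p u = 0 → p v = 0 → u ≠ v → G.Adj u v) ∧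
    (∀ u v, p u = 1 → p v = 1 → u ≠ v → G.Adj u v) ∧
    (∀ u v, p u = 2 → p v ≠ 0 → ¬ G.Adj u v)

/-- A proper colouring whose colours are the vertices of a clique uses at most `ω` colours. -/
lemma colorable_of_clique {V : Type} [Fintype V] {G : SimpleGraph V} (Q : Finset V)
    (hQ : G.IsClique (Q : Set V)) (f : V → V) (hf : ∀ v, f v ∈ Q)
    (hp : ∀ u v, G.Adj u v → f u ≠ f v) : G.Colorable G.cliqueNum := by
  have C : G.Coloring Q := Coloring.mk (fun v => ⟨f v, hf v⟩) (by
    intro u v h e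
    exact hp u v h (by simpa using e))
  have h1 := C.colorable
  rw [Fintype.card_coe] at h1
  exact h1.mono (IsClique.card_le_cliqueNum (tc := hQ))

/-- Class `2` keeps distinct colours and lends them to non-neighbours in class `0`; at most two
more colours are needed, and each of them is justified by a larger clique. -/
lemma JoinSplit.colorable {V : Type} [Fintype V] {G : SimpleGraph V} {p : V → Fin 3}
    (h : JoinSplit G p) : G.Colorable G.cliqueNum := by
  obtain ⟨h0, h1, h2⟩ := h
  set I : Finset V := univ.filter (fun v => p v = 2) with hI
  have mI : ∀ v, v ∈ I ↔ p v = 2 := by simp [hI]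
  -- `g v` is the colour class `2` lends to a class-`0` vertex that misses part of class `2`.
  have hg : ∀ v, ∃ i, (∃ j ∈ I, ¬ G.Adj v j) → i ∈ I ∧ ¬ G.Adj v i := by
    intro v
    by_cases hv : ∃ j ∈ I, ¬ G.Adj v j
    · obtain ⟨j, hj⟩ := hv
      exact ⟨j, fun _ => hj⟩
    · exact ⟨v, fun h => absurd h hv⟩
  choose g hg using hg
  let f : V → V → V → V := fun k a v =>
    if p v = 2 then v else if p v = 1 then k else
      if ∃ j ∈ I, ¬ G.Adj v j then g v else a
  have trich : ∀ x : Fin 3, x = 0 ∨ x = 1 ∨ x = 2 := by decide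
  have key : ∀ k a : V, k ∉ I → a ∉ I →
      (a ≠ k ∨ ∀ u v, p u = 0 → p v = 1 → (∀ j ∈ I, G.Adj u j) → ¬ G.Adj u v) →
      ∀ u v, G.Adj u v → f k a u ≠ f k a v := by
    intro k a hk ha hka
    -- By symmetry the label of `u` may be assumed not to exceed the label of `v`.
    have main : ∀ u v, p u ≤ p v → G.Adj u v → f k a u ≠ f k a v := by
      intro u v huv hadj hfe
      have hne := hadj.ne
      rcases trich (p u) with hu | hu | hu <;> rcases trich (p v) with hv | hv | hv
      · exact h0 u v hu hv hadj
      · by_cases hj : ∃ j ∈ I, ¬ G.Adj u j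
        · simp [f, hu, hv, hj] at hfe
          exact hk (hfe ▸ (hg u hj).1)
        · simp only [f, hu, hv, hj] at hfe
          simp at hfe
          push Not at hj
          rcases hka with hka | hka
          · exact hka hfe
          · exact hka u v hu hv hj hadj
      · by_cases hj : ∃ j ∈ I, ¬ G.Adj u j
        · simp [f, hu, hv, hj] at hfe
          exact (hg u hj).2 (hfe ▸ hadj)
        · simp only [f, hu, hv, hj] at hfe
          simp at hfe
          exact ha (hfe ▸ (mI v).2 hv)
      · rw [hu, hv] at huv; revert huv; decide
      · exact h1 u v hu hv hadj
      · simp [f, hu, hv] at hfe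
        exact hk (hfe ▸ (mI v).2 hv)
      · rw [hu, hv] at huv; revert huv; decide
      · rw [hu, hv] at huv; revert huv; decide
      · simp [f, hu, hv] at hfe
        exact hne hfe
    intro u v hadj
    rcases le_total (p u) (p v) with h | h
    · exact main u v h hadj
    · exact (main v u h hadj.symm).symm
  have hfmem : ∀ (Q : Finset V) (k a : V), I ⊆ Q →
      (∀ v, p v = 1 → k ∈ Q) → (∀ v, p v = 0 → (∀ j ∈ I, G.Adj v j) → a ∈ Q) →
      ∀ v, f k a v ∈ Q := by
    intro Q k a hIQ hk ha v
    rcases trich (p v) with hv | hv | hv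
    · by_cases hj : ∃ j ∈ I, ¬ G.Adj v j
      · simp only [f, hv, hj]
        simpa using hIQ (hg v hj).1
      · simp only [f, hv, hj]
        push Not at hj
        simpa using ha v hv hj
    · simp only [f, hv]
      simpa using hk v hv
    · simp only [f, hv]
      simpa using hIQ ((mI v).2 hv)
  have cI : G.IsClique (I : Set V) := by
    intro u hu v hv huv
    have hu' := (mI u).1 hu
    have hv' := (mI v).1 hv
    exact h2 u v hu' (by rw [hv']; decide) huv
  have nI : ∀ v, p v ≠ 2 → v ∉ I := fun v hv hh => hv ((mI v).1 hh)
  by_cases hE : ∃ a k, p a = 0 ∧ p k = 1 ∧ (∀ j ∈ I, G.Adj a j) ∧ G.Adj a k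
  · obtain ⟨a, k, ha, hk, haI, hak⟩ := hE
    refine colorable_of_clique (insert a (insert k I)) ?_ (f k a) ?_ ?_
    · rw [coe_insert, coe_insert]
      refine (cI.insert ?_).insert ?_
      · intro b hb hne
        exact (h2 b k ((mI b).1 hb) (by rw [hk]; decide) hne.symm).symm
      · intro b hb hne
        rcases hb with rfl | hb
        · exact hak
        · exact haI b hb
    · exact hfmem _ _ _ (fun x hx => by simp [hx]) (by simp) (by simp)
    · exact key k a (nI k (by rw [hk]; decide)) (nI a (by rw [ha]; decide)) (Or.inl hak.ne)
  · push Not at hE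
    have hE' : ∀ u v, p u = 0 → p v = 1 → (∀ j ∈ I, G.Adj u j) → ¬ G.Adj u v := hE
    by_cases hW : ∃ w, p w = 1 ∨ (p w = 0 ∧ ∀ j ∈ I, G.Adj w j)
    · obtain ⟨w, hw⟩ := hW
      have hwI : w ∉ I := by
        apply nI
        rcases hw with hw | ⟨hw, -⟩ <;> rw [hw] <;> decide
      refine colorable_of_clique (insert w I) ?_ (f w w) ?_ (key w w hwI hwI (Or.inr hE'))
      · rw [coe_insert]
        refine cI.insert ?_
        intro b hb hne
        rcases hw with hw | hw
        · exact (h2 b w ((mI b).1 hb) (by rw [hw]; decide) hne.symm).symm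
        · exact hw.2 b hb
      · exact hfmem _ _ _ (fun x hx => by simp [hx]) (by simp) (by simp)
    · push Not at hW
      -- Every vertex receives a colour from class `2`.
      by_cases hV : ∃ w, w ∉ I
      · obtain ⟨w, hw⟩ := hV
        refine colorable_of_clique I cI (f w w) ?_ (key w w hw hw (Or.inr hE'))
        exact hfmem I w w subset_rfl (fun v hv => absurd hv (hW v).1)
          (fun v hv hj => by
            obtain ⟨j, hj1, hj2⟩ := (hW v).2 hv
            exact absurd (hj j hj1) hj2)
      · push Not at hV
        exact colorable_of_clique I cI id hV (fun u v h => h.ne)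

/-- Class `0` keeps distinct colours. Hall's theorem colours class `1`, using colours of
non-neighbours in class `0` and `ω - |class 0|` new ones; its condition holds because a set `T`
in class `1` together with its common neighbours in class `0` is a clique. -/
lemma CoJoinSplit.colorable {V : Type} [Fintype V] {G : SimpleGraph V} {p : V → Fin 3}
    (h : CoJoinSplit G p) : G.Colorable G.cliqueNum := by
  obtain ⟨h0, h1, h2⟩ := h
  set A : Finset V := univ.filter (fun v => p v = 0) with hA
  have mA : ∀ v, v ∈ A ↔ p v = 0 := by simp [hA]
  have cA : G.IsClique (A : Set V) := by
    intro u hu v hv huv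
    exact h0 u v ((mA u).1 hu) ((mA v).1 hv) huv
  have hAω : #A ≤ G.cliqueNum := IsClique.card_le_cliqueNum (tc := cA)
  have trich : ∀ x : Fin 3, x = 0 ∨ x = 1 ∨ x = 2 := by decide
  set r := G.cliqueNum - #A with hr
  let N : V → Finset V := fun k => A.filter (fun a => ¬ G.Adj k a)
  let t : {v // p v = 1} → Finset (V ⊕ Fin r) := fun k => (N k).disjSum univ
  obtain ⟨c, hcinj, hc⟩ := (Finset.all_card_le_biUnion_card_iff_exists_injective t).1 (by
    intro T
    rcases T.eq_empty_or_nonempty with rfl | hT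
    · simp
    set M : Finset V := T.biUnion (fun k => N k) with hM
    have hMA : M ⊆ A := by
      intro x hx
      simp only [hM, mem_biUnion] at hx
      obtain ⟨k, -, hk⟩ := hx
      exact (mem_filter.1 hk).1
    have hsub : M.disjSum (univ : Finset (Fin r)) ⊆ T.biUnion t := by
      intro x hx
      simp only [mem_biUnion]
      rcases x with x | x
      · simp only [inl_mem_disjSum, hM, mem_biUnion] at hx
        obtain ⟨k, hk, hx⟩ := hx
        exact ⟨k, hk, by simpa [t] using hx⟩
      · obtain ⟨k, hk⟩ := hT
        exact ⟨k, hk, by simp [t]⟩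
    have hcl : G.IsClique ((T.map ⟨Subtype.val, Subtype.val_injective⟩ ∪ (A \ M) : Finset V) :
        Set V) := by
      have cross : ∀ k : {v // p v = 1}, k ∈ T → ∀ a ∈ A \ M, G.Adj k a := by
        intro k hk a ha
        by_contra hka
        rw [mem_sdiff] at ha
        exact ha.2 (mem_biUnion.2 ⟨k, hk, mem_filter.2 ⟨ha.1, hka⟩⟩)
      intro u hu v hv huv
      simp only [coe_union, Set.mem_union, mem_coe, mem_map, Function.Embedding.coeFn_mk] at hu hv
      rcases hu with ⟨k, hk, rfl⟩ | hu <;> rcases hv with ⟨l, hl, rfl⟩ | hv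
      · exact h1 _ _ k.2 l.2 huv
      · exact cross k hk v hv
      · exact (cross l hl u hu).symm
      · exact cA (mem_sdiff.1 hu).1 (mem_sdiff.1 hv).1 huv
    have hle := IsClique.card_le_cliqueNum (tc := hcl)
    rw [card_union_of_disjoint, card_map, card_sdiff_of_subset hMA] at hle
    · have h3 := card_le_card hsub
      rw [card_disjSum, card_univ, Fintype.card_fin] at h3
      have := card_le_card hMA
      omega
    · rw [Finset.disjoint_left]
      intro x hx hx'
      simp only [mem_map, Function.Embedding.coeFn_mk] at hx
      obtain ⟨k, -, rfl⟩ := hx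
      have := (mA _).1 (mem_sdiff.1 hx').1
      rw [k.2] at this
      exact absurd this (by decide))
  have hq : ∀ v, p v = 2 → ∃ q : V ⊕ Fin r, q ∈ (A.filter (fun a => ¬ G.Adj v a)).disjSum
      (univ : Finset (Fin r)) := by
    intro v hv
    by_cases hj : ∃ a ∈ A, ¬ G.Adj v a
    · obtain ⟨a, ha, hva⟩ := hj
      exact ⟨Sum.inl a, by simp [ha, hva]⟩
    · push Not at hj
      have hcl : G.IsClique ((insert v A : Finset V) : Set V) := by
        rw [coe_insert]
        exact cA.insert (fun b hb _ => hj b hb)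
      have hle := IsClique.card_le_cliqueNum (tc := hcl)
      have hvA : v ∉ A := by
        intro hh
        have := (mA v).1 hh
        rw [hv] at this
        exact absurd this (by decide)
      rw [card_insert_of_notMem hvA] at hle
      exact ⟨Sum.inr ⟨0, by omega⟩, by simp⟩
  choose! q hq using hq
  let f : V → V ⊕ Fin r := fun v =>
    if p v = 0 then Sum.inl v else if h : p v = 1 then c ⟨v, h⟩ else q v
  have hf0 : ∀ v, p v = 0 → f v = Sum.inl v := fun v hv => by simp [f, hv]
  have hf1 : ∀ v (h : p v = 1), f v = c ⟨v, h⟩ := fun v hv => by simp [f, hv]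
  have hf2 : ∀ v, p v = 2 → f v = q v := fun v hv => by simp [f, hv]
  have hmem : ∀ v, p v ≠ 0 → f v ∈ (N v).disjSum univ := by
    intro v hv
    rcases trich (p v) with h | h | h
    · exact absurd h hv
    · rw [hf1 v h]; exact hc ⟨v, h⟩
    · rw [hf2 v h]; exact hq v h
  have hmemA : ∀ v, f v ∈ A.disjSum univ := by
    intro v
    by_cases hv : p v = 0
    · rw [hf0 v hv]; simpa using (mA v).2 hv
    · exact disjSum_mono (filter_subset _ _) subset_rfl (hmem v hv)
  have hprop : ∀ u v, p u ≤ p v → G.Adj u v → f u ≠ f v := by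
    intro u v huv hadj hfe
    by_cases hu : p u = 0
    · by_cases hv : p v = 0
      · rw [hf0 u hu, hf0 v hv] at hfe
        exact hadj.ne (Sum.inl_injective hfe)
      · have := hmem v hv
        rw [← hfe, hf0 u hu, inl_mem_disjSum] at this
        exact (mem_filter.1 this).2 hadj.symm
    · have hv : p v ≠ 0 := by
        intro hv
        rw [hv] at huv
        exact hu (le_antisymm huv (Fin.zero_le _))
      rcases trich (p v) with hv' | hv' | hv'
      · exact hv hv'
      · rcases trich (p u) with hu' | hu' | hu'
        · exact hu hu'
        · rw [hf1 u hu', hf1 v hv'] at hfe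
          have := hcinj hfe
          exact hadj.ne (by simpa using this)
        · exact h2 u v hu' hv hadj
      · exact h2 v u hv' hu hadj.symm
  have C : G.Coloring (A.disjSum (univ : Finset (Fin r))) :=
    Coloring.mk (fun v => ⟨f v, hmemA v⟩) (by
      intro u v hadj e
      have e' : f u = f v := by simpa using e
      rcases le_total (p u) (p v) with h | h
      · exact hprop u v h hadj e'
      · exact hprop v u h hadj.symm e'.symm)
  have h3 := C.colorable
  rw [Fintype.card_coe, card_disjSum, card_univ, Fintype.card_fin] at h3
  exact h3.mono (by omega)

lemma isPerfect_of_colorable {V : Type} {G : SimpleGraph V}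
    (h : ∀ s : Set V, (G.induce s).Colorable (G.induce s).cliqueNum) : IsPerfect G := fun s =>
  le_antisymm (h s).chromaticNumber_le (cliqueNum_le_chromaticNumber)

lemma JoinSplit.isPerfect {V : Type} [Fintype V] {G : SimpleGraph V} {p : V → Fin 3}
    (h : JoinSplit G p) : IsPerfect G := by
  refine isPerfect_of_colorable fun s => JoinSplit.colorable (p := fun v : s => p v) ?_
  exact ⟨fun u v => h.1 u v, fun u v => h.2.1 u v,
    fun u v hu hv huv => h.2.2 u v hu hv (fun e => huv (Subtype.ext e))⟩

lemma CoJoinSplit.isPerfect {V : Type} [Fintype V] {G : SimpleGraph V} {p : V → Fin 3}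
    (h : CoJoinSplit G p) : IsPerfect G := by
  refine isPerfect_of_colorable fun s => CoJoinSplit.colorable (p := fun v : s => p v) ?_
  exact ⟨fun u v hu hv huv => h.1 u v hu hv (fun e => huv (Subtype.ext e)),
    fun u v hu hv huv => h.2.1 u v hu hv (fun e => huv (Subtype.ext e)),
    fun u v => h.2.2 u v⟩

lemma JoinSplit.compl {V : Type} {G : SimpleGraph V} {p : V → Fin 3}
    (h : JoinSplit G p) : CoJoinSplit Gᶜ p := by
  refine ⟨fun u v hu hv huv => ?_, fun u v hu hv huv => ?_, fun u v hu hv hadj => ?_⟩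
  · exact (compl_adj _ _ _).2 ⟨huv, h.1 u v hu hv⟩
  · exact (compl_adj _ _ _).2 ⟨huv, h.2.1 u v hu hv⟩
  · rw [compl_adj] at hadj
    exact hadj.2 (h.2.2 u v hu hv hadj.1)

lemma label_eq_iff {V : Type} [DecidableEq V] {A K : Finset V} (hK : ∀ v ∈ K, v ∉ A) (v : V) :
    ((if v ∈ A then (0 : Fin 3) else if v ∈ K then 1 else 2) = 0 ↔ v ∈ A) ∧
    ((if v ∈ A then (0 : Fin 3) else if v ∈ K then 1 else 2) = 1 ↔ v ∈ K) ∧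
    ((if v ∈ A then (0 : Fin 3) else if v ∈ K then 1 else 2) = 2 ↔ v ∉ A ∧ v ∉ K) := by
  have := hK v
  by_cases hA : v ∈ A <;> by_cases hB : v ∈ K <;> simp_all

/-- For a fixed labelling with `a + b` vertices, `a` of them in class `0` and `k` in class `1`,
the only freedom in `JoinSplit` is the choice of the edges among `a * b` pairs. -/
lemma exists_joinSplit_family (n a b k j : ℕ) (hab : a + b = n) (hk : k ≤ b) :
    ∃ 𝒢 : Finset (SimpleGraph (Fin n)), (a * b).choose j ≤ #𝒢 ∧
      ∀ G ∈ 𝒢, edgeCount G = (b.choose 2 - k.choose 2) + j ∧ IsPerfect G ∧ IsPerfect Gᶜ := by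
  obtain ⟨A, -, hA⟩ := Finset.exists_subset_card_eq (s := (univ : Finset (Fin n))) (n := a)
    (by simp; omega)
  have hB : #Aᶜ = b := by rw [card_compl, hA, Fintype.card_fin]; omega
  obtain ⟨K, hKB, hK⟩ := Finset.exists_subset_card_eq (s := Aᶜ) (n := k) (by omega)
  set F : Finset (Sym2 (Fin n)) := (Aᶜ).offDiag.image Sym2.mk.uncurry \
    K.offDiag.image Sym2.mk.uncurry with hF
  set X : Finset (Sym2 (Fin n)) := (A ×ˢ Aᶜ).image Sym2.mk.uncurry with hX
  have mF : ∀ u v, s(u, v) ∈ F ↔ u ∉ A ∧ v ∉ A ∧ u ≠ v ∧ ¬ (u ∈ K ∧ v ∈ K) := by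
    intro u v
    simp only [hF, mem_sdiff, mem_image, mem_offDiag, mem_compl, Prod.exists,
      Function.uncurry_apply_pair, Sym2.eq_iff]
    constructor
    · rintro ⟨⟨x, y, h, ⟨rfl, rfl⟩ | ⟨rfl, rfl⟩⟩, h2⟩
      · exact ⟨h.1, h.2.1, h.2.2, fun h3 => h2 ⟨x, y, ⟨h3.1, h3.2, h.2.2⟩, Or.inl ⟨rfl, rfl⟩⟩⟩
      · exact ⟨h.2.1, h.1, h.2.2.symm,
          fun h3 => h2 ⟨x, y, ⟨h3.2, h3.1, h.2.2⟩, Or.inr ⟨rfl, rfl⟩⟩⟩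
    · rintro ⟨h1, h2, h3, h4⟩
      refine ⟨⟨u, v, ⟨h1, h2, h3⟩, Or.inl ⟨rfl, rfl⟩⟩, ?_⟩
      rintro ⟨x, y, h, ⟨rfl, rfl⟩ | ⟨rfl, rfl⟩⟩
      · exact h4 ⟨h.1, h.2.1⟩
      · exact h4 ⟨h.2.1, h.1⟩
  have mX : ∀ u v, s(u, v) ∈ X ↔ (u ∈ A ∧ v ∉ A) ∨ (v ∈ A ∧ u ∉ A) := by
    intro u v
    simp only [hX, mem_image, mem_product, mem_compl, Prod.exists,
      Function.uncurry_apply_pair, Sym2.eq_iff]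
    constructor
    · rintro ⟨x, y, h, ⟨rfl, rfl⟩ | ⟨rfl, rfl⟩⟩
      · exact Or.inl h
      · exact Or.inr h
    · rintro (h | h)
      · exact ⟨u, v, h, Or.inl ⟨rfl, rfl⟩⟩
      · exact ⟨v, u, h, Or.inr ⟨rfl, rfl⟩⟩
  have cF : #F = b.choose 2 - k.choose 2 := by
    rw [hF, card_sdiff_of_subset (image_subset_image (offDiag_mono hKB)), Sym2.card_image_offDiag,
      Sym2.card_image_offDiag, hB, hK]
  have cX : #X = a * b := by
    rw [hX, card_image_of_injOn, card_product, hA, hB]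
    rintro ⟨u, v⟩ h ⟨x, y⟩ h' e
    simp only [coe_product, Set.mem_prod, mem_coe, mem_compl] at h h'
    simp only [Function.uncurry_apply_pair, Sym2.eq_iff] at e
    rcases e with ⟨rfl, rfl⟩ | ⟨rfl, rfl⟩
    · rfl
    · exact absurd h.1 h'.2
  have dFX : Disjoint F X := by
    rw [Finset.disjoint_left]
    intro e
    induction e with
    | _ u v =>
      rw [mF, mX]
      tauto
  have ndF : ∀ e ∈ F, ¬ e.IsDiag := by
    intro e
    induction e with
    | _ u v => rw [mF]; simp; tauto
  have ndX : ∀ e ∈ X, ¬ e.IsDiag := by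
    intro e
    induction e with
    | _ u v => rw [mX]; simp; rintro (h | h) rfl <;> tauto
  let Φ : Finset (Sym2 (Fin n)) → SimpleGraph (Fin n) := fun S => fromEdgeSet (↑(F ∪ S))
  have eΦ : ∀ S ⊆ X, (Φ S).edgeSet = ↑(F ∪ S) := by
    intro S hS
    simp only [Φ, edgeSet_fromEdgeSet]
    ext e
    simp only [Set.mem_sdiff, mem_coe, mem_union]
    constructor
    · exact fun h => h.1
    · rintro (h | h)
      · exact ⟨Or.inl h, ndF e h⟩
      · exact ⟨Or.inr h, ndX e (hS h)⟩
  have aΦ : ∀ S ⊆ X, ∀ u v, (Φ S).Adj u v ↔ s(u, v) ∈ F ∨ s(u, v) ∈ S := by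
    intro S hS u v
    rw [← mem_edgeSet, eΦ S hS]
    simp
  refine ⟨(X.powersetCard j).image Φ, ?_, ?_⟩
  · rw [card_image_of_injOn, card_powersetCard, cX]
    intro S hS T hT hST
    have hS' := (mem_powersetCard.1 hS).1
    have hT' := (mem_powersetCard.1 hT).1
    have h1 : F ∪ S = F ∪ T := by
      have := congrArg edgeSet hST
      rw [eΦ S hS', eΦ T hT'] at this
      exact_mod_cast this
    have h2 := congrArg (fun Z => Z \ F) h1
    simp only [union_sdiff_left] at h2
    rwa [sdiff_eq_self_of_disjoint (dFX.symm.mono_left hS'),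
      sdiff_eq_self_of_disjoint (dFX.symm.mono_left hT')] at h2
  · intro G hG
    obtain ⟨S, hS, rfl⟩ := mem_image.1 hG
    obtain ⟨hS, hj⟩ := mem_powersetCard.1 hS
    have hJ : JoinSplit (Φ S) (fun v => if v ∈ A then 0 else if v ∈ K then 1 else 2) := by
      have KA : ∀ v ∈ K, v ∉ A := fun v hv => by simpa using hKB hv
      have p0 := fun v => (label_eq_iff KA v).1
      have p1 := fun v => (label_eq_iff KA v).2.1
      have p2 := fun v => (label_eq_iff KA v).2.2
      refine ⟨?_, ?_, ?_⟩
      · intro u v hu hv hadj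
        replace hu := (p0 u).1 hu
        replace hv := (p0 v).1 hv
        rcases (aΦ S hS u v).1 hadj with h | h
        · exact ((mF u v).1 h).1 hu
        · have := (mX u v).1 (hS h)
          tauto
      · intro u v hu hv hadj
        replace hu := (p1 u).1 hu
        replace hv := (p1 v).1 hv
        rcases (aΦ S hS u v).1 hadj with h | h
        · exact ((mF u v).1 h).2.2.2 ⟨hu, hv⟩
        · have := (mX u v).1 (hS h)
          have := KA u hu
          have := KA v hv
          tauto
      · intro u v hu hv huv
        replace hu := (p2 u).1 hu
        replace hv : v ∉ A := fun h => hv ((p0 v).2 h)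
        exact (aΦ S hS u v).2 (Or.inl ((mF u v).2 ⟨hu.1, hv, huv, fun h => hu.2 h.1⟩))
    refine ⟨?_, hJ.isPerfect, hJ.compl.isPerfect⟩
    rw [edgeCount, eΦ S hS, Nat.card_coe_set_eq, Set.ncard_coe_finset,
      card_union_of_disjoint (dFX.mono_right hS), cF, hj]

lemma edgeCount_compl {n : ℕ} (G : SimpleGraph (Fin n)) :
    edgeCount Gᶜ + edgeCount G = n.choose 2 := by
  have h1 : (⊤ : SimpleGraph (Fin n)).edgeSet.ncard = n.choose 2 := by
    rw [← Nat.card_coe_set_eq, Nat.card_eq_fintype_card, ← edgeFinset_card,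
      card_edgeFinset_top_eq_card_choose_two, Fintype.card_fin]
  rw [edgeCount, edgeCount, Nat.card_coe_set_eq, Nat.card_coe_set_eq, ← h1,
    ← Set.ncard_union_eq (disjoint_edgeSet.2 disjoint_compl_left), ← edgeSet_sup, compl_sup_eq_top]

/-- The number of perfect graphs with `m` edges is at least `C(ab, j)` as soon as `m`, or the
number of edges of the complements, equals `C(b,2) - C(k,2) + j`. -/
lemma choose_le_card_Pset (n a b k j : ℕ) (c : ℝ) (hab : a + b = n) (hk : k ≤ b)
    (hm : b.choose 2 - k.choose 2 + j = ⌊c * (n.choose 2 : ℝ)⌋₊ ∨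
      b.choose 2 - k.choose 2 + j + ⌊c * (n.choose 2 : ℝ)⌋₊ = n.choose 2) :
    (a * b).choose j ≤ #(Pset n c) := by
  obtain ⟨𝒢, h1, h2⟩ := exists_joinSplit_family n a b k j hab hk
  refine h1.trans ?_
  rcases hm with hm | hm
  · refine card_le_card fun G hG => ?_
    obtain ⟨h3, h4, -⟩ := h2 G hG
    simp [Pset, h4, h3, hm]
  · refine card_le_card_of_injOn (fun G => Gᶜ) (fun G hG => ?_) (fun G _ G' _ h => ?_)
    · obtain ⟨h3, -, h4⟩ := h2 G hG
      have := edgeCount_compl G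
      simp only [Pset, coe_filter, mem_univ, true_and, Set.mem_ofPred_eq]
      exact ⟨h4, by omega⟩
    · exact compl_injective h

/-! ### Entropy lower bound for binomial coefficients -/

lemma pow_mul_factorial_le (j k : ℕ) : j ^ k * j.factorial ≤ j ^ j * k.factorial := by
  rcases le_total j k with h | h
  · obtain ⟨d, rfl⟩ := Nat.exists_eq_add_of_le h
    calc j ^ (j + d) * j.factorial = j ^ j * (j.factorial * j ^ d) := by ring
      _ ≤ j ^ j * (j.factorial * (j + 1) ^ d) := by gcongr; omega
      _ ≤ j ^ j * (j + d).factorial := by gcongr; exact Nat.factorial_mul_pow_le_factorial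
  · obtain ⟨d, rfl⟩ := Nat.exists_eq_add_of_le h
    have h1 : (k + d).factorial ≤ k.factorial * (k + d) ^ d := by
      rw [← Nat.factorial_mul_ascFactorial]
      gcongr
      exact Nat.ascFactorial_le_pow_add k d
    calc (k + d) ^ k * (k + d).factorial ≤ (k + d) ^ k * (k.factorial * (k + d) ^ d) := by gcongr
      _ = (k + d) ^ (k + d) * k.factorial := by ring

/-- In the binomial expansion of `(j + (N - j)) ^ N` the term of index `j` is the largest. -/
lemma choose_term_le {N j k : ℕ} (hj : j ≤ N) (hk : k ≤ N) :
    N.choose k * (j ^ k * (N - j) ^ (N - k)) ≤ N.choose j * (j ^ j * (N - j) ^ (N - j)) := by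
  have h1 := pow_mul_factorial_le j k
  have h2 := pow_mul_factorial_le (N - j) (N - k)
  have e1 := Nat.choose_mul_factorial_mul_factorial hj
  have e2 := Nat.choose_mul_factorial_mul_factorial hk
  have hpos : 0 < k.factorial * (N - k).factorial * (j.factorial * (N - j).factorial) := by
    positivity
  refine Nat.le_of_mul_le_mul_left ?_ hpos
  calc _ = (N.choose k * k.factorial * (N - k).factorial) *
        ((j ^ k * j.factorial) * ((N - j) ^ (N - k) * (N - j).factorial)) := by ring
    _ ≤ (N.choose k * k.factorial * (N - k).factorial) *
        ((j ^ j * k.factorial) * ((N - j) ^ (N - j) * (N - k).factorial)) := by gcongr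
    _ = (N.choose j * j.factorial * (N - j).factorial) *
        ((j ^ j * k.factorial) * ((N - j) ^ (N - j) * (N - k).factorial)) := by rw [e1, e2]
    _ = _ := by ring

lemma pow_self_le_choose {N j : ℕ} (hj : j ≤ N) :
    N ^ N ≤ (N + 1) * (N.choose j * (j ^ j * (N - j) ^ (N - j))) := by
  calc N ^ N = (j + (N - j)) ^ N := by rw [Nat.add_sub_cancel' hj]
    _ = ∑ k ∈ range (N + 1), j ^ k * (N - j) ^ (N - k) * N.choose k := by rw [add_pow]; simp
    _ ≤ ∑ k ∈ range (N + 1), N.choose j * (j ^ j * (N - j) ^ (N - j)) := by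
        refine Finset.sum_le_sum fun k hk => ?_
        rw [mul_comm]
        exact choose_term_le hj (by simpa [Nat.lt_succ_iff] using hk)
    _ = _ := by simp

lemma log_choose_ge {N j : ℕ} (hj0 : 0 < j) (hjN : j < N) :
    (N : ℝ) * Real.binEntropy (j / N) - Real.log (N + 1) ≤ Real.log (N.choose j) := by
  have h := pow_self_le_choose hjN.le
  have hN : (0 : ℝ) < N := by exact_mod_cast hj0.trans hjN
  have hj : (0 : ℝ) < j := by exact_mod_cast hj0
  have hs : (0 : ℝ) < (N : ℝ) - j := by
    have : (j : ℝ) < N := by exact_mod_cast hjN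
    linarith
  have hc : (0 : ℝ) < N.choose j := by exact_mod_cast Nat.choose_pos hjN.le
  have h' : (N : ℝ) ^ N ≤ ((N : ℝ) + 1) * ((N.choose j : ℝ) * ((j : ℝ) ^ j *
      ((N : ℝ) - j) ^ (N - j))) := by
    have := (Nat.cast_le (α := ℝ)).2 h
    push_cast [Nat.cast_sub hjN.le] at this
    exact this
  have h2 := Real.log_le_log (by positivity) h'
  rw [Real.log_mul (by positivity) (by positivity), Real.log_mul (by positivity) (by positivity),
    Real.log_mul (by positivity) (by positivity), Real.log_pow, Real.log_pow, Real.log_pow,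
    Nat.cast_sub hjN.le] at h2
  have e : (N : ℝ) * Real.binEntropy (j / N) =
      N * Real.log N - j * Real.log j - (N - j) * Real.log (N - j) := by
    have e1 : (1 : ℝ) - j / N = (N - j) / N := by field_simp
    rw [Real.binEntropy, e1, Real.log_inv, Real.log_inv, Real.log_div hj.ne' hN.ne',
      Real.log_div hs.ne' hN.ne']
    field_simp
    ring
  linarith

/-! ### The limit -/

/-- The number of edges of a graph in `Pset n c` if `c ≤ 1/2`, and of its complement
otherwise. -/
noncomputable def sparseEdges (n : ℕ) (c : ℝ) : ℕ :=
  if c ≤ 1 / 2 then ⌊c * (n.choose 2 : ℝ)⌋₊ else n.choose 2 - ⌊c * (n.choose 2 : ℝ)⌋₊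

lemma floor_le_choose {c : ℝ} (hc1 : c < 1) (n : ℕ) :
    ⌊c * (n.choose 2 : ℝ)⌋₊ ≤ n.choose 2 := by
  apply Nat.floor_le_of_le
  have : (0 : ℝ) ≤ n.choose 2 := by positivity
  nlinarith

open Filter Topology

lemma tendsto_inv_nat : Tendsto (fun n : ℕ => 1 / (n : ℝ)) atTop (𝓝 0) :=
  tendsto_one_div_atTop_nhds_zero_nat

lemma tendsto_choose_two {u : ℕ → ℕ} {α : ℝ}
    (hu : Tendsto (fun n : ℕ => (u n : ℝ) / n) atTop (𝓝 α)) :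
    Tendsto (fun n : ℕ => ((u n).choose 2 : ℝ) / (n : ℝ) ^ 2) atTop (𝓝 (α ^ 2 / 2)) := by
  have h := ((hu.mul (hu.sub tendsto_inv_nat)).div_const 2)
  have e : α * (α - 0) / 2 = α ^ 2 / 2 := by ring
  rw [e] at h
  refine h.congr fun n => ?_
  rw [Nat.cast_choose_two]
  rcases eq_or_ne (n : ℝ) 0 with h0 | h0
  · simp [h0]
  · field_simp

lemma tendsto_total : Tendsto (fun n : ℕ => (n.choose 2 : ℝ) / (n : ℝ) ^ 2) atTop (𝓝 (1 / 2)) := by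
  have h : Tendsto (fun n : ℕ => (n : ℝ) / n) atTop (𝓝 1) := by
    refine tendsto_const_nhds.congr' ?_
    filter_upwards [eventually_gt_atTop 0] with n hn
    field_simp
  simpa using tendsto_choose_two (u := fun n => n) h

lemma tendsto_choose_atTop : Tendsto (fun n : ℕ => (n.choose 2 : ℝ)) atTop atTop := by
  have h : ∀ n : ℕ, ((n : ℝ) - 1) / 2 ≤ (n.choose 2 : ℝ) := by
    intro n
    rw [Nat.cast_choose_two]
    rcases Nat.eq_zero_or_pos n with rfl | hn
    · norm_num
    · have : (1 : ℝ) ≤ n := by exact_mod_cast hn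
      nlinarith
  refine tendsto_atTop_mono h ?_
  exact (tendsto_atTop_add_const_right _ _ tendsto_natCast_atTop_atTop).atTop_div_const
    (by norm_num)

lemma tendsto_floor_edges {c : ℝ} (hc0 : 0 < c) :
    Tendsto (fun n : ℕ => (⌊c * (n.choose 2 : ℝ)⌋₊ : ℝ) / (n : ℝ) ^ 2) atTop (𝓝 (c / 2)) := by
  have h := ((tendsto_nat_floor_mul_div_atTop hc0.le).comp tendsto_choose_atTop).mul tendsto_total
  rw [mul_one_div] at h
  refine h.congr' ?_
  filter_upwards [tendsto_choose_atTop.eventually_gt_atTop 0] with n hn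
  simp only [Function.comp]
  field_simp

lemma tendsto_sparseEdges {c : ℝ} (hc0 : 0 < c) (hc1 : c < 1) :
    Tendsto (fun n : ℕ => (sparseEdges n c : ℝ) / (n : ℝ) ^ 2) atTop
      (𝓝 ((if c ≤ 1 / 2 then c else 1 - c) / 2)) := by
  unfold sparseEdges
  by_cases h : c ≤ 1 / 2
  · simpa only [h, if_true] using tendsto_floor_edges hc0
  · simp only [h, if_false]
    have h1 := tendsto_total.sub (tendsto_floor_edges hc0)
    have e : (1 : ℝ) / 2 - c / 2 = (1 - c) / 2 := by ring
    rw [e] at h1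
    refine h1.congr fun n => ?_
    rw [Nat.cast_sub (floor_le_choose hc1 n), sub_div]

lemma exists_C5free_family (c : ℝ) (n : ℕ) :
    ∃ ℱ : Finset (SimpleGraph (Fin n)), #ℱ = #(Pset n c) ∧ (∀ G ∈ ℱ, ¬ HasC5 G) ∧
      ∀ G ∈ ℱ, edgeCount G = sparseEdges n c := by
  by_cases h : c ≤ 1 / 2
  · refine ⟨Pset n c, rfl, fun G hG hC => ?_, fun G hG => ?_⟩
    · exact not_isPerfect_of_hasC5 hC (mem_filter.1 hG).2.1
    · simp only [sparseEdges, h, if_true]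
      exact (mem_filter.1 hG).2.2
  · refine ⟨(Pset n c).image (fun G => Gᶜ), card_image_of_injective _ compl_injective, ?_, ?_⟩
    · intro G hG hC
      obtain ⟨G', hG', rfl⟩ := mem_image.1 hG
      exact not_isPerfect_of_hasC5 hC.of_compl (mem_filter.1 hG').2.1
    · intro G hG
      obtain ⟨G', hG', rfl⟩ := mem_image.1 hG
      have h1 := edgeCount_compl G'
      rw [(mem_filter.1 hG').2.2] at h1
      simp only [sparseEdges, h, if_false]
      omega

/-- Upper bound at scale `n²`, with a free parameter `x` to be optimised. -/
lemma log_card_Pset_le (c : ℝ) {x ε : ℝ} (hε : 0 < ε) (hx0 : 0 < x) (hx1 : x ≤ 1) :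
    ∃ K : ℝ, ∀ n : ℕ, Real.log #(Pset n c) ≤ (sparseEdges n c : ℝ) * (-Real.log x) +
      ((Real.log (1 + x) / 4 + ε) * (n : ℝ) ^ 2 + K * n + K) := by
  obtain ⟨K, hK, h⟩ := card_C5free_le hε hx0 hx1
  refine ⟨K, fun n => ?_⟩
  obtain ⟨ℱ, h1, h2, h3⟩ := exists_C5free_family c n
  have h4 := h n (sparseEdges n c) ℱ h2 h3
  rw [h1] at h4
  have hlx := Real.log_nonpos hx0.le hx1
  have hl1 : 0 ≤ Real.log (1 + x) := Real.log_nonneg (by linarith)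
  rcases Nat.eq_zero_or_pos #(Pset n c) with h0 | h0
  · rw [h0, Nat.cast_zero, Real.log_zero]
    have : 0 ≤ (sparseEdges n c : ℝ) * (-Real.log x) := by
      apply mul_nonneg (by positivity); linarith
    positivity
  · have h0' : (0 : ℝ) < #(Pset n c) := by exact_mod_cast h0
    have h5 := Real.log_le_log (by positivity) h4
    rw [Real.log_exp, Real.log_mul h0'.ne' (by positivity), Real.log_pow] at h5
    linarith

lemma eventually_upper {c x : ℝ} (hc0 : 0 < c) (hc1 : c < 1) (hx0 : 0 < x) (hx1 : x ≤ 1)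
    {y : ℝ} (hy : (if c ≤ 1 / 2 then c else 1 - c) / 2 * (-Real.log x) + Real.log (1 + x) / 4 < y) :
    ∀ᶠ n : ℕ in atTop, Real.log #(Pset n c) / (n : ℝ) ^ 2 < y := by
  set L := (if c ≤ 1 / 2 then c else 1 - c) / 2 * (-Real.log x) + Real.log (1 + x) / 4 with hL
  obtain ⟨K, hK⟩ := log_card_Pset_le c (ε := (y - L) / 2) (by linarith) hx0 hx1
  have h1 : Tendsto (fun n : ℕ => (sparseEdges n c : ℝ) / (n : ℝ) ^ 2 * (-Real.log x) +
      ((Real.log (1 + x) / 4 + (y - L) / 2) + K * (1 / (n : ℝ)) + K * (1 / (n : ℝ)) ^ 2)) atTop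
      (𝓝 ((if c ≤ 1 / 2 then c else 1 - c) / 2 * (-Real.log x) +
        ((Real.log (1 + x) / 4 + (y - L) / 2) + K * 0 + K * 0 ^ 2))) :=
    ((tendsto_sparseEdges hc0 hc1).mul_const _).add
      ((tendsto_const_nhds.add (tendsto_inv_nat.const_mul K)).add
        ((tendsto_inv_nat.pow 2).const_mul K))
  have h2 := h1.eventually_lt_const (u := y) (by linarith)
  filter_upwards [h2, eventually_gt_atTop 0] with n hn hn0
  refine lt_of_le_of_lt ?_ hn
  have hn' : (0 : ℝ) < n := by exact_mod_cast hn0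
  rw [div_le_iff₀ (by positivity)]
  refine (hK n).trans (le_of_eq ?_)
  field_simp

/-- Lower bound at scale `n²`: half of the vertices form class `0`, and class `1` has about
`κ n` vertices, so that the fixed part has about `(1/4 - κ²) n² / 2` edges and a proportion `q`
of the `n² / 4` free pairs is left to be chosen. -/
lemma eventually_lower {c κ q : ℝ} (hc0 : 0 < c) (hc1 : c < 1) (hκ0 : 0 ≤ κ) (hκ1 : κ ≤ 1 / 2)
    (hq : q = 2 * ((if c ≤ 1 / 2 then c else 1 - c) - 1 / 4 + κ ^ 2)) (hq0 : 0 < q) (hq1 : q < 1)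
    {y : ℝ} (hy : y < Real.binEntropy q / 4) :
    ∀ᶠ n : ℕ in atTop, y < Real.log #(Pset n c) / (n : ℝ) ^ 2 := by
  set a : ℕ → ℕ := fun n => n / 2 with ha
  set b : ℕ → ℕ := fun n => n - n / 2 with hb
  set k : ℕ → ℕ := fun n => ⌊κ * (n : ℝ)⌋₊ with hk
  set f : ℕ → ℕ := fun n => (b n).choose 2 - (k n).choose 2 with hf
  set j : ℕ → ℕ := fun n => sparseEdges n c - f n with hj
  set M : ℕ → ℕ := fun n => a n * b n with hM
  have ta : Tendsto (fun n : ℕ => (a n : ℝ) / n) atTop (𝓝 (1 / 2)) := by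
    have h := (tendsto_nat_floor_mul_div_atTop (R := ℝ) (a := 1 / 2) (by norm_num)).comp
      tendsto_natCast_atTop_atTop
    refine h.congr fun n => ?_
    simp only [Function.comp, ha]
    congr 2
    rw [one_div_mul_eq_div]
    exact_mod_cast Nat.floor_div_natCast (K := ℝ) (n : ℝ) 2 |>.trans (by simp)
  have tb : Tendsto (fun n : ℕ => (b n : ℝ) / n) atTop (𝓝 (1 / 2)) := by
    have h := ta.const_sub 1
    have e : (1 : ℝ) - 1 / 2 = 1 / 2 := by norm_num
    rw [e] at h
    refine h.congr' ?_
    filter_upwards [eventually_gt_atTop 0] with n hn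
    simp only [ha, hb]
    rw [Nat.cast_sub (Nat.div_le_self n 2)]
    have : (n : ℝ) ≠ 0 := by exact_mod_cast hn.ne'
    field_simp
  have tk : Tendsto (fun n : ℕ => (k n : ℝ) / n) atTop (𝓝 κ) :=
    (tendsto_nat_floor_mul_div_atTop hκ0).comp tendsto_natCast_atTop_atTop
  have hkb : ∀ n, k n ≤ b n := by
    intro n
    have h1 : (k n : ℝ) ≤ n / 2 := by
      refine (Nat.floor_le (by positivity)).trans ?_
      have : (0 : ℝ) ≤ n := by positivity
      nlinarith
    have h2 : ((2 * k n : ℕ) : ℝ) ≤ (n : ℕ) := by push_cast; linarith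
    have h3 : 2 * k n ≤ n := by exact_mod_cast h2
    simp only [hb]
    omega
  have tf : Tendsto (fun n : ℕ => (f n : ℝ) / (n : ℝ) ^ 2) atTop
      (𝓝 ((1 / 2) ^ 2 / 2 - κ ^ 2 / 2)) := by
    refine ((tendsto_choose_two tb).sub (tendsto_choose_two tk)).congr fun n => ?_
    rw [hf, Nat.cast_sub (Nat.choose_le_choose 2 (hkb n)), sub_div]
  have ts := tendsto_sparseEdges hc0 hc1
  set d := (if c ≤ 1 / 2 then c else 1 - c) with hd
  have hfs : ∀ᶠ n : ℕ in atTop, f n ≤ sparseEdges n c := by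
    filter_upwards [tf.eventually_lt ts (by linarith), eventually_gt_atTop 0] with n hn hn0
    have hn' : (0 : ℝ) < n := by exact_mod_cast hn0
    rw [div_lt_div_iff_of_pos_right (by positivity)] at hn
    exact_mod_cast hn.le
  have tj : Tendsto (fun n : ℕ => (j n : ℝ) / (n : ℝ) ^ 2) atTop (𝓝 (q / 4)) := by
    have h := ts.sub tf
    have e : d / 2 - ((1 / 2) ^ 2 / 2 - κ ^ 2 / 2) = q / 4 := by rw [hq]; ring
    rw [e] at h
    refine h.congr' ?_
    filter_upwards [hfs] with n hn
    rw [hj, Nat.cast_sub hn, sub_div]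
  have tM : Tendsto (fun n : ℕ => (M n : ℝ) / (n : ℝ) ^ 2) atTop (𝓝 (1 / 4)) := by
    have h := ta.mul tb
    have e : (1 / 2 : ℝ) * (1 / 2) = 1 / 4 := by norm_num
    rw [e] at h
    refine h.congr fun n => ?_
    simp only [hM]
    push_cast
    rw [div_mul_div_comm, sq]
  have tjM : Tendsto (fun n : ℕ => (j n : ℝ) / M n) atTop (𝓝 q) := by
    have h := tj.div tM (by norm_num)
    have e : q / 4 / (1 / 4) = q := by ring
    rw [e] at h
    refine h.congr' ?_
    filter_upwards [eventually_gt_atTop 0] with n hn0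
    have hn' : (n : ℝ) ≠ 0 := by exact_mod_cast hn0.ne'
    simp only [Pi.div_apply]
    rw [div_div_div_cancel_right₀ (by positivity)]
  have hj0 : ∀ᶠ n : ℕ in atTop, 0 < j n := by
    filter_upwards [tjM.eventually_const_lt hq0] with n hn
    rcases Nat.eq_zero_or_pos (j n) with h0 | h0
    · simp [h0] at hn
    · exact h0
  have hM0 : ∀ᶠ n : ℕ in atTop, 0 < M n := by
    filter_upwards [tM.eventually_const_lt (by norm_num : (0 : ℝ) < 1 / 4)] with n hn
    rcases Nat.eq_zero_or_pos (M n) with h0 | h0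
    · simp [h0] at hn
    · exact h0
  have hjM : ∀ᶠ n : ℕ in atTop, j n < M n := by
    filter_upwards [tjM.eventually_lt_const hq1, hM0] with n hn h0
    have h0' : (0 : ℝ) < M n := by exact_mod_cast h0
    rw [div_lt_one h0'] at hn
    exact_mod_cast hn
  have tlog : Tendsto (fun n : ℕ => Real.log ((M n : ℝ) + 1) / (n : ℝ) ^ 2) atTop (𝓝 0) := by
    have h2 : Tendsto (fun n : ℕ => 2 * (1 / (n : ℝ))) atTop (𝓝 0) := by
      simpa using tendsto_inv_nat.const_mul 2
    refine squeeze_zero' (Eventually.of_forall fun n => ?_) ?_ h2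
    · exact div_nonneg (Real.log_nonneg (by linarith [Nat.cast_nonneg (α := ℝ) (M n)]))
        (by positivity)
    · filter_upwards [eventually_gt_atTop 0] with n hn0
      have hn' : (0 : ℝ) < n := by exact_mod_cast hn0
      have h3 : M n ≤ n * n := Nat.mul_le_mul (Nat.div_le_self n 2) (Nat.sub_le n _)
      have h4 : (M n : ℝ) ≤ n * n := by exact_mod_cast h3
      have h5 : Real.log ((M n : ℝ) + 1) ≤ Real.log (((n : ℝ) + 1) ^ 2) :=
        Real.log_le_log (by positivity) (by nlinarith)
      rw [Real.log_pow] at h5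
      have h6 := Real.log_le_sub_one_of_pos (x := (n : ℝ) + 1) (by positivity)
      rw [div_le_iff₀ (by positivity)]
      have e : 2 * (1 / (n : ℝ)) * (n : ℝ) ^ 2 = 2 * n := by field_simp
      rw [e]
      push_cast at h5
      linarith
  have tfin : Tendsto (fun n : ℕ => (M n : ℝ) / (n : ℝ) ^ 2 * Real.binEntropy ((j n : ℝ) / M n) -
      Real.log ((M n : ℝ) + 1) / (n : ℝ) ^ 2) atTop (𝓝 (1 / 4 * Real.binEntropy q - 0)) :=
    (tM.mul ((Real.binEntropy_continuous.tendsto q).comp tjM)).sub tlog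
  filter_upwards [tfin.eventually_const_lt (u := y) (by linarith), hfs, hj0, hjM,
    eventually_gt_atTop 0] with n hn hfs hj0 hjM hn0
  have hn' : (0 : ℝ) < n := by exact_mod_cast hn0
  refine hn.trans_le ?_
  have h1 := log_choose_ge hj0 hjM
  have h2 : (M n).choose (j n) ≤ #(Pset n c) := by
    refine choose_le_card_Pset n (a n) (b n) (k n) (j n) c ?_ (hkb n) ?_
    · simp only [ha, hb]; omega
    · have h3 : f n + j n = sparseEdges n c := by simp only [hj]; omega
      have h4 := floor_le_choose hc1 n
      change f n + j n = _ ∨ f n + j n + _ = _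
      rw [h3, sparseEdges]
      split_ifs
      · exact Or.inl rfl
      · right; omega
  have h3 : Real.log ((M n).choose (j n)) ≤ Real.log #(Pset n c) :=
    Real.log_le_log (by exact_mod_cast Nat.choose_pos hjM.le) (by exact_mod_cast h2)
  rw [le_div_iff₀ (by positivity)]
  refine le_trans (le_of_eq ?_) (h1.trans h3)
  field_simp

lemma binEnt_eq (x : ℝ) : binEnt x = Real.binEntropy x / Real.log 2 := by
  rw [binEnt, Real.binEntropy, Real.logb, Real.logb, Real.log_inv, Real.log_inv]
  ring

/-- At the optimal `x = q / (1 - q)` the upper bound becomes the entropy of `q = 2d`. -/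
lemma entropy_identity {d : ℝ} (hd0 : 0 < d) (hd1 : d < 1 / 4) :
    d / 2 * (-Real.log (2 * d / (1 - 2 * d))) + Real.log (1 + 2 * d / (1 - 2 * d)) / 4 =
      Real.binEntropy (2 * d) / 4 := by
  have h1 : (0 : ℝ) < 1 - 2 * d := by linarith
  have e : 1 + 2 * d / (1 - 2 * d) = (1 - 2 * d)⁻¹ := by field_simp; ring
  rw [e, Real.log_div (by positivity) h1.ne', Real.binEntropy, Real.log_inv, Real.log_inv]
  ring

lemma hfun_eq {c d : ℝ} (hd : d = if c ≤ 1 / 2 then c else 1 - c) :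
    hfun c = Real.binEntropy (if d < 1 / 4 then 2 * d else 1 / 2) / (2 * Real.log 2) := by
  have hl : Real.log 2 ≠ 0 := (Real.log_pos (by norm_num)).ne'
  have hhalf : Real.binEntropy (1 / 2) = Real.log 2 := by
    rw [one_div, Real.binEntropy_two_inv]
  unfold hfun
  by_cases h1 : c < 1 / 4
  · have hd' : d = c := by rw [hd, if_pos (by linarith)]
    rw [if_pos h1, hd', if_pos h1, binEnt_eq]
    field_simp
  rw [if_neg h1]
  by_cases h2 : c ≤ 3 / 4
  · have hd' : ¬ d < 1 / 4 := by rw [hd]; split_ifs <;> linarith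
    rw [if_pos h2, if_neg hd', hhalf]
    field_simp
  · have hd' : d = 1 - c := by rw [hd, if_neg (by linarith)]
    rw [if_neg h2, hd', if_pos (by linarith), binEnt_eq, ← Real.binEntropy_one_sub]
    have e : 1 - (2 * c - 1) = 2 * (1 - c) := by ring
    rw [e]
    field_simp

lemma tendsto_log_card {c d : ℝ} (hc0 : 0 < c) (hc1 : c < 1)
    (hd : d = if c ≤ 1 / 2 then c else 1 - c) :
    Tendsto (fun n : ℕ => Real.log #(Pset n c) / (n : ℝ) ^ 2) atTop
      (𝓝 (Real.binEntropy (if d < 1 / 4 then 2 * d else 1 / 2) / 4)) := by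
  have hd0 : 0 < d := by rw [hd]; split_ifs <;> linarith
  have hd1 : d ≤ 1 / 2 := by rw [hd]; split_ifs <;> linarith
  by_cases h : d < 1 / 4
  · simp only [h, if_true]
    refine tendsto_order.2 ⟨fun y hy => ?_, fun y hy => ?_⟩
    · exact eventually_lower (κ := 1 / 2) hc0 hc1 (by norm_num) le_rfl
        (by rw [← hd]; ring) (by linarith) (by linarith) hy
    · refine eventually_upper (x := 2 * d / (1 - 2 * d)) hc0 hc1 (div_pos (by linarith)
        (by linarith)) ?_ ?_
      · rw [div_le_one (by linarith)]; linarith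
      · rw [← hd, entropy_identity hd0 h]; exact hy
  · simp only [h, if_false]
    push Not at h
    have hs := Real.sq_sqrt (show 0 ≤ 1 / 2 - d by linarith)
    have hs0 := Real.sqrt_nonneg (1 / 2 - d)
    refine tendsto_order.2 ⟨fun y hy => ?_, fun y hy => ?_⟩
    · refine eventually_lower (κ := Real.sqrt (1 / 2 - d)) hc0 hc1 hs0 (by nlinarith)
        (by rw [← hd, hs]; ring) (by norm_num) (by norm_num) hy
    · refine eventually_upper (x := 1) hc0 hc1 one_pos le_rfl ?_
      rw [one_div, Real.binEntropy_two_inv] at hy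
      norm_num
      exact hy

/-- For every `0 < c < 1`, `log₂|𝒫(n,c)| / C(n,2)` converges to `h(c)` as `n → ∞`. -/
theorem stmt1 (c : ℝ) (hc0 : 0 < c) (hc1 : c < 1) :
    Filter.Tendsto (fun n : ℕ => Real.logb 2 ((Pset n c).card : ℝ) / (n.choose 2 : ℝ))
      Filter.atTop (nhds (hfun c)) := by
  have hl : Real.log 2 ≠ 0 := (Real.log_pos (by norm_num)).ne'
  rw [hfun_eq (c := c) rfl]
  have h := ((tendsto_log_card hc0 hc1 rfl).div tendsto_total (by norm_num)).div_const (Real.log 2)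
  convert h.congr' ?_ using 2
  · field_simp
    norm_num
  · filter_upwards [eventually_gt_atTop 0] with n hn
    have hn' : (n : ℝ) ≠ 0 := by exact_mod_cast hn.ne'
    rw [Pi.div_apply, div_div_div_cancel_right₀ (by positivity), Real.logb]
    ring
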